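/- arXiv:2106.14353 — 4 statements merged into one kernel-verified Lean document; each statement's English description precedes it below -/
import Mathlib

section
/- Let d = 1, δ ∈ (0,2), λ > 0 with δλ ∈ (0,2). Then for every z > 0 the improper integral \widehat{D}(z) = (1/π) lim_{T→∞} ∫₀^T cos(z t) D_{λ,δ}(t) dt exists, and z^{1+δλ} \widehat{D}(z) → 2^{δλ−1} λ δ Γ((1+λδ)/2) / ( √π Γ(1−λδ/2) ) as z → ∞. -/
open MeasureTheory Set Filter intervalIntegral

/-- The Dagum function with parameters `lam > 0`, `δ > 0`:
`D_{λ,δ}(r) = 1 - (r^δ/(1+r^δ))^λ`. -/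
noncomputable def dagum (lam δ r : ℝ) : ℝ := 1 - (r ^ δ / (1 + r ^ δ)) ^ lam

/-!
With `a = δλ`, integration by parts turns `∫₀^T cos (zt) D(t) dt` into a boundary term tending to
`0` and `z⁻¹ a ∫₀^T sin (zt) t ^ (a - 1) (1 + t ^ δ) ^ (-(λ + 1)) dt`, whose integrand is absolutely
integrable. It is the imaginary part of the Mellin transform at `a` of
`e ^ (izt) (1 + t ^ δ) ^ (-(λ + 1))`. On a sector `0 ≤ arg w ≤ α` with `α < π` and `δα < π` the
function `(1 + w ^ δ) ^ (-(λ + 1))` is holomorphic, bounded and `O(|w| ^ (-δ(λ + 1)))`, so the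
half-line may be rotated to the ray `arg w = α`, along which `e ^ (izw)` decays exponentially. There
Watson's lemma gives the leading term `e ^ (iπa/2) Γ(a) z ^ (-a)`. Its imaginary part is
`sin (πa/2) Γ(a) z ^ (-a)`, and reflection and duplication for `Γ` produce the stated constant.
-/

open scoped Topology Interval Real

section ContourShift

open Complex

variable {E : Type*} [NormedAddCommGroup E]

lemma integrable_horizontal_of_norm_le {f : ℂ → E} {B : ℝ → ℝ} {s : Set ℝ} {θ₀ : ℝ} (hθ₀ : θ₀ ∈ s)
    (hd : ContinuousOn f (im ⁻¹' s)) (hBint : Integrable B)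
    (hf : ∀ u : ℝ, ∀ θ ∈ s, ‖f (u + θ * I)‖ ≤ B u) :
    Integrable fun u : ℝ ↦ f (u + θ₀ * I) :=
  hBint.mono'
    (hd.comp_continuous (by fun_prop) fun u ↦ by simpa using hθ₀).aestronglyMeasurable
    (.of_forall fun u ↦ hf u θ₀ hθ₀)

variable [NormedSpace ℂ E]

lemma tendsto_intervalIntegral_vertical_of_norm_le {f : ℂ → E} {B : ℝ → ℝ} {l : Filter ℝ}
    {α β : ℝ} (hB : Tendsto B l (𝓝 0)) (hf : ∀ u : ℝ, ∀ θ ∈ [[α, β]], ‖f (u + θ * I)‖ ≤ B u) :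
    Tendsto (fun u : ℝ ↦ ∫ θ : ℝ in α..β, f (u + θ * I)) l (𝓝 0) :=
  squeeze_zero_norm
    (fun u ↦ norm_integral_le_of_norm_le_const fun θ hθ ↦ hf u θ (uIoc_subset_uIcc hθ))
    (by simpa using hB.mul_const |β - α|)

theorem integral_horizontal_eq_of_norm_le {f : ℂ → E} {B : ℝ → ℝ} {α β : ℝ}
    (hd : DifferentiableOn ℂ f (im ⁻¹' [[α, β]])) (hBint : Integrable B)
    (hBtop : Tendsto B atTop (𝓝 0)) (hBbot : Tendsto B atBot (𝓝 0))
    (hf : ∀ u : ℝ, ∀ θ ∈ [[α, β]], ‖f (u + θ * I)‖ ≤ B u) :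
    ∫ u : ℝ, f (u + α * I) = ∫ u : ℝ, f (u + β * I) := by
  have rectangle (R : ℝ) :
      (∫ u : ℝ in -R..R, f (u + α * I)) - (∫ u : ℝ in -R..R, f (u + β * I)) +
        I • (∫ θ : ℝ in α..β, f (R + θ * I)) -
        I • (∫ θ : ℝ in α..β, f ((-R : ℝ) + θ * I)) = 0 :=
    integral_boundary_rect_eq_zero_of_differentiableOn f ⟨-R, α⟩ ⟨R, β⟩
      (hd.mono fun w hw ↦ hw.2)
  have horizontal {θ : ℝ} (hθ : θ ∈ [[α, β]]) :
      Tendsto (fun R : ℝ ↦ ∫ u : ℝ in -R..R, f (u + θ * I)) atTop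
        (𝓝 (∫ u : ℝ, f (u + θ * I))) :=
    intervalIntegral_tendsto_integral
      (integrable_horizontal_of_norm_le hθ hd.continuousOn hBint hf)
      tendsto_neg_atTop_atBot tendsto_id
  have right := tendsto_intervalIntegral_vertical_of_norm_le hBtop hf
  have left := (tendsto_intervalIntegral_vertical_of_norm_le hBbot hf).comp
    tendsto_neg_atTop_atBot
  have limit := (((horizontal left_mem_uIcc).sub (horizontal right_mem_uIcc)).add
    (right.const_smul I)).sub (left.const_smul I)
  have := tendsto_nhds_unique limit (tendsto_const_nhds.congr fun R ↦ (rectangle R).symm)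
  simpa [sub_eq_zero] using this

lemma mellin_eq_integral_cexp_smul (f : ℝ → E) (s : ℂ) :
    mellin f s = ∫ u : ℝ, cexp (s * u) • f (Real.exp u) := by
  have substitution := integral_image_eq_integral_abs_deriv_smul (s := univ) MeasurableSet.univ
    (fun u _ ↦ (Real.hasDerivAt_exp u).hasDerivWithinAt) Real.exp_injective.injOn
    (fun t : ℝ ↦ (t : ℂ) ^ (s - 1) • f t)
  rw [image_univ, Real.range_exp, setIntegral_univ] at substitution
  rw [mellin, substitution]
  congr! 2 with u
  rw [Real.abs_exp, ← coe_smul, smul_smul, ofReal_exp, cpow_def_of_ne_zero (exp_ne_zero _),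
    ← ofReal_exp, ← ofReal_log (Real.exp_pos u).le, Real.log_exp, ofReal_exp, ← exp_add]
  ring_nf

lemma integrable_exp_neg_mul_abs {κ : ℝ} (hκ : 0 < κ) :
    Integrable fun u : ℝ ↦ Real.exp (-κ * |u|) := by
  rw [← integrableOn_univ, ← Iic_union_Ioi (a := (0 : ℝ))]
  refine .union ?_ ?_
  · refine (integrableOn_exp_mul_Iic hκ 0).congr_fun (fun u hu ↦ ?_) measurableSet_Iic
    simp [abs_of_nonpos (mem_Iic.mp hu)]
  · refine (integrableOn_exp_mul_Ioi (neg_lt_zero.mpr hκ) 0).congr_fun (fun u hu ↦ ?_)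
      measurableSet_Ioi
    simp [abs_of_pos (mem_Ioi.mp hu)]

/-- The closed sector between the rays `arg w = 0` and `arg w = α`, with its vertex removed: the
region swept when the positive half-line is rotated by the angle `α`, which may be negative and is
meant to satisfy `|α| < π`. -/
def puncturedSector (α : ℝ) : Set ℂ := {w | w ≠ 0 ∧ w.arg ∈ [[0, α]]}

namespace puncturedSector

variable {α : ℝ}

lemma exp_mem (hα : |α| < π) {w : ℂ} (hw : w.im ∈ [[0, α]]) : cexp w ∈ puncturedSector α := by
  have him : |w.im| < π := by simpa using (abs_sub_left_of_mem_uIcc hw).trans_lt (by simpa)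
  refine ⟨exp_ne_zero w, ?_⟩
  rwa [← log_im, log_exp (abs_lt.mp him).1 (abs_lt.mp him).2.le]

lemma ofReal_mul_exp_mem (hα : |α| < π) {r θ : ℝ} (hr : 0 < r) (hθ : θ ∈ [[0, α]]) :
    r * cexp (θ * I) ∈ puncturedSector α := by
  rw [← Real.exp_log hr, ofReal_exp, ← exp_add]
  exact exp_mem hα (by simpa using hθ)

lemma ofReal_mem {r : ℝ} (hr : 0 < r) : (r : ℂ) ∈ puncturedSector α :=
  ⟨ofReal_ne_zero.mpr hr.ne', by simp [arg_ofReal_of_nonneg hr.le]⟩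

lemma subset_slitPlane (hα : |α| < π) : puncturedSector α ⊆ slitPlane := fun w hw ↦ by
  refine mem_slitPlane_iff_arg.mpr ⟨fun harg ↦ ?_, hw.1⟩
  have := abs_sub_left_of_mem_uIcc hw.2
  rw [harg, sub_zero, sub_zero, abs_of_pos Real.pi_pos] at this
  exact hα.not_ge this

lemma cpow_mem {d : ℝ} (hd : |d * α| < π) {w : ℂ} (hw : w ∈ puncturedSector α) :
    w ^ (d : ℂ) ∈ puncturedSector (d * α) := by
  rw [cpow_def_of_ne_zero hw.1]
  refine exp_mem hd ?_
  rw [im_mul_ofReal, log_im, mul_comm w.arg, ← mul_zero d, ← image_const_mul_uIcc]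
  exact mem_image_of_mem _ hw.2

/-- The projection of `1 + w` onto the bisector of the angle between `1` and `w`. -/
lemma cos_mul_one_add_norm_le (hα : |α| < π) {w : ℂ} (hw : w ∈ puncturedSector α) :
    Real.cos (α / 2) * (1 + ‖w‖) ≤ ‖1 + w‖ := by
  have harg : |w.arg| ≤ |α| := by simpa using abs_sub_left_of_mem_uIcc hw.2
  have hcos : Real.cos (α / 2) ≤ Real.cos (w.arg / 2) := by
    rw [← Real.cos_abs (α / 2), ← Real.cos_abs (w.arg / 2), abs_div, abs_div, abs_two]
    exact Real.cos_le_cos_of_nonneg_of_le_pi (by positivity)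
      (by linarith [abs_nonneg α]) (by linarith)
  have projection : (cexp (-(w.arg / 2 : ℝ) * I) * (1 + w)).re =
      Real.cos (w.arg / 2) * (1 + ‖w‖) := by
    nth_rw 2 [← norm_mul_exp_arg_mul_I w]
    rw [mul_add, mul_left_comm, ← exp_add, mul_one, ← ofReal_neg]
    have : (↑(-(w.arg / 2)) * I + w.arg * I : ℂ) = (w.arg / 2 : ℝ) * I := by push_cast; ring
    rw [this, add_re, re_ofReal_mul, exp_ofReal_mul_I_re, exp_ofReal_mul_I_re, Real.cos_neg]
    ring
  calc Real.cos (α / 2) * (1 + ‖w‖) ≤ Real.cos (w.arg / 2) * (1 + ‖w‖) := by gcongr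
    _ ≤ ‖cexp (-(w.arg / 2 : ℝ) * I) * (1 + w)‖ := projection ▸ re_le_norm _
    _ = ‖1 + w‖ := by rw [norm_mul, ← ofReal_neg, norm_exp_ofReal_mul_I, one_mul]

lemma one_add_mem_slitPlane (hα : |α| < π) {w : ℂ} (hw : w ∈ puncturedSector α) :
    1 + w ∈ slitPlane := by
  have h := subset_slitPlane hα hw
  rw [mem_slitPlane_iff] at h ⊢
  refine h.imp (fun hre ↦ ?_) (fun him ↦ by simpa using him)
  rw [add_re, one_re]
  positivity

end puncturedSector

lemma norm_exp_mul_smul_exp_le {φ : ℂ → E} {s : ℂ} {a b C α : ℝ} (hα : |α| < π)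
    (ha : ∀ w ∈ puncturedSector α, ‖φ w‖ ≤ C * ‖w‖ ^ (-a))
    (hb : ∀ w ∈ puncturedSector α, ‖φ w‖ ≤ C * ‖w‖ ^ (-b)) (u : ℝ) {θ : ℝ} (hθ : θ ∈ [[0, α]]) :
    ‖cexp (s * (u + θ * I)) • φ (cexp (u + θ * I))‖ ≤
      C * Real.exp (|s.im| * π) * Real.exp (-min (a - s.re) (s.re - b) * |u|) := by
  have hmem : cexp (u + θ * I) ∈ puncturedSector α := .exp_mem hα (by simpa using hθ)
  have hC : 0 ≤ C := by
    simpa using (norm_nonneg _).trans (ha 1 (by simpa using puncturedSector.ofReal_mem one_pos))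
  have hθπ : |θ| ≤ π := (by simpa using abs_sub_left_of_mem_uIcc hθ : |θ| ≤ |α|).trans hα.le
  have factor : ‖cexp (s * (u + θ * I))‖ ≤ Real.exp (|s.im| * π) * Real.exp (s.re * u) := by
    rw [norm_exp, ← Real.exp_add]
    gcongr
    have : -(s.im * θ) ≤ |s.im| * π :=
      (neg_le_abs _).trans ((abs_mul _ _).trans_le (by gcongr))
    simp
    linarith
  have power (c : ℝ) : ‖cexp (u + θ * I)‖ ^ (-c) = Real.exp (-c * u) := by
    rw [norm_exp, ← Real.exp_mul]
    simp [mul_comm]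
  have decay : ‖φ (cexp (u + θ * I))‖ ≤
      C * Real.exp (-min (a - s.re) (s.re - b) * |u| - s.re * u) := by
    rcases le_total 0 u with hu | hu
    · refine (ha _ hmem).trans ?_
      rw [power, abs_of_nonneg hu]
      gcongr
      linarith [mul_le_mul_of_nonneg_right (min_le_left (a - s.re) (s.re - b)) hu]
    · refine (hb _ hmem).trans ?_
      rw [power, abs_of_nonpos hu]
      gcongr
      linarith [mul_le_mul_of_nonpos_right (min_le_right (a - s.re) (s.re - b)) hu]
  calc _ ≤ Real.exp (|s.im| * π) * Real.exp (s.re * u) *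
        (C * Real.exp (-min (a - s.re) (s.re - b) * |u| - s.re * u)) := by
        rw [norm_smul]; gcongr
    _ = _ := by rw [Real.exp_sub]; field_simp

theorem mellin_eq_smul_mellin_rotate {φ : ℂ → E} {s : ℂ} {a b C α : ℝ} (hα : |α| < π)
    (hd : DifferentiableOn ℂ φ (puncturedSector α))
    (ha : ∀ w ∈ puncturedSector α, ‖φ w‖ ≤ C * ‖w‖ ^ (-a))
    (hb : ∀ w ∈ puncturedSector α, ‖φ w‖ ≤ C * ‖w‖ ^ (-b))
    (hbs : b < s.re) (hsa : s.re < a) :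
    mellin (fun r ↦ φ r) s = cexp (s * (α * I)) • mellin (fun r ↦ φ (r * cexp (α * I))) s := by
  have hκ : 0 < min (a - s.re) (s.re - b) := lt_min (by linarith) (by linarith)
  have bound_tendsto_zero {l : Filter ℝ} (hl : Tendsto (fun u : ℝ ↦ |u|) l atTop) :
      Tendsto (fun u : ℝ ↦ C * Real.exp (|s.im| * π) *
        Real.exp (-min (a - s.re) (s.re - b) * |u|)) l (𝓝 0) := by
    simpa using (Real.tendsto_exp_atBot.comp
      (hl.const_mul_atTop_of_neg (neg_lt_zero.mpr hκ))).const_mul (C * Real.exp (|s.im| * π))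
  have shift := integral_horizontal_eq_of_norm_le (f := fun w ↦ cexp (s * w) • φ (cexp w))
    (α := 0) (β := α)
    (.smul (by fun_prop) (hd.comp differentiable_exp.differentiableOn
      fun w hw ↦ puncturedSector.exp_mem hα hw))
    ((integrable_exp_neg_mul_abs hκ).const_mul _)
    (bound_tendsto_zero tendsto_abs_atTop_atTop) (bound_tendsto_zero tendsto_abs_atBot_atTop)
    fun u θ hθ ↦ norm_exp_mul_smul_exp_le hα ha hb u hθ
  rw [mellin_eq_integral_cexp_smul, mellin_eq_integral_cexp_smul, ← MeasureTheory.integral_smul]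
  calc ∫ u : ℝ, cexp (s * u) • φ (Real.exp u)
      = ∫ u : ℝ, cexp (s * (u + (0 : ℝ) * I)) • φ (cexp (u + (0 : ℝ) * I)) := by simp
    _ = ∫ u : ℝ, cexp (s * (u + α * I)) • φ (cexp (u + α * I)) := shift
    _ = ∫ u : ℝ, cexp (s * (α * I)) • cexp (s * u) • φ (Real.exp u * cexp (α * I)) := by
      simp only [smul_smul, mul_add, exp_add, ofReal_exp, mul_comm (cexp (s * (α * I)))]

lemma exp_neg_mul_le_mul_rpow_neg {κ a r : ℝ} (hκ : 0 < κ) (ha : 0 < a) (hr : 0 < r) :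
    Real.exp (-(κ * r)) ≤ (a / κ) ^ a * r ^ (-a) := by
  have hx : κ * r / a ≤ Real.exp (κ * r / a) := by linarith [Real.add_one_le_exp (κ * r / a)]
  calc Real.exp (-(κ * r)) = Real.exp (κ * r / a) ^ (-a) := by
        rw [← Real.exp_mul]; field_simp
    _ ≤ (κ * r / a) ^ (-a) :=
        Real.rpow_le_rpow_of_nonpos (by positivity) hx (neg_nonpos.mpr ha.le)
    _ = (a / κ) ^ a * r ^ (-a) := by
        rw [mul_div_right_comm, Real.mul_rpow (by positivity) hr.le, Real.rpow_neg (by positivity),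
          ← Real.inv_rpow (by positivity), inv_div]

lemma re_mul_norm_le_re_mul {c w : ℂ} (hw : w ∈ puncturedSector (-c.arg)) :
    c.re * ‖w‖ ≤ (c * w).re := by
  have harg : |c.arg + w.arg| ≤ |c.arg| := by
    have := abs_sub_right_of_mem_uIcc hw.2
    rwa [sub_zero, abs_neg, ← abs_neg, neg_sub, sub_neg_eq_add, add_comm] at this
  have hcos : Real.cos c.arg ≤ Real.cos (c.arg + w.arg) := by
    rw [← Real.cos_abs c.arg, ← Real.cos_abs (c.arg + w.arg)]
    exact Real.cos_le_cos_of_nonneg_of_le_pi (abs_nonneg _) (abs_arg_le_pi c) harg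
  calc c.re * ‖w‖ = ‖c‖ * ‖w‖ * Real.cos c.arg := by rw [← norm_mul_cos_arg]; ring
    _ ≤ ‖c‖ * ‖w‖ * Real.cos (c.arg + w.arg) := by gcongr
    _ = (c * w).re := by
      rw [Real.cos_add, mul_re, ← norm_mul_cos_arg c, ← norm_mul_cos_arg w,
        ← norm_mul_sin_arg c, ← norm_mul_sin_arg w]
      ring

lemma mellin_exp_neg_ofReal_mul {r : ℝ} (hr : 0 < r) {s : ℂ} (hs : 0 < s.re) :
    mellin (fun t : ℝ ↦ cexp (-(r * t))) s = (1 / (r : ℂ)) ^ s * Gamma s := by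
  simpa only [mellin, smul_eq_mul] using integral_cpow_mul_exp_neg_mul_Ioi hs hr

theorem mellin_exp_neg_mul {c s : ℂ} (hc : 0 < c.re) (hs : 0 < s.re) :
    mellin (fun t : ℝ ↦ cexp (-(c * t))) s = (1 / c) ^ s * Gamma s := by
  have hc0 : c ≠ 0 := fun h ↦ by simp [h] at hc
  have harg : |-c.arg| < π := by
    rw [abs_neg]
    exact (abs_arg_lt_pi_div_two_iff.mpr (.inl hc)).trans (by linarith [Real.pi_pos])
  have decay {w : ℂ} (hw : w ∈ puncturedSector (-c.arg)) :
      ‖cexp (-(c * w))‖ ≤ Real.exp (-(c.re * ‖w‖)) := by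
    rw [norm_exp, neg_re, Real.exp_le_exp, neg_le_neg_iff]
    exact re_mul_norm_le_re_mul hw
  have align : c * cexp ((-c.arg : ℝ) * I) = ‖c‖ := by
    nth_rw 1 [← norm_mul_exp_arg_mul_I c]
    rw [mul_assoc, ← exp_add]
    simp
  rw [mellin_eq_smul_mellin_rotate (φ := fun w ↦ cexp (-(c * w))) (a := s.re + 1) (b := 0)
    (C := max 1 (((s.re + 1) / c.re) ^ (s.re + 1))) harg (by fun_prop) (fun w hw ↦ ?_)
    (fun w hw ↦ ?_) hs (by linarith)]
  · have : (1 / c) ^ s = cexp (s * ((-c.arg : ℝ) * I)) * (1 / (‖c‖ : ℂ)) ^ s := by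
      rw [one_div, one_div, cpow_def_of_ne_zero (inv_ne_zero hc0),
        cpow_def_of_ne_zero (by simpa using hc0), log_inv _ (slitPlane_arg_ne_pi (.inl hc)), log,
        ← ofReal_inv, ← ofReal_log (by positivity), Real.log_inv, ← exp_add]
      push_cast
      ring_nf
    rw [this, mul_assoc, smul_eq_mul, ← mellin_exp_neg_ofReal_mul (norm_pos_iff.mpr hc0) hs]
    simp_rw [mul_left_comm c, align, mul_comm]
  · have hw0 : 0 < ‖w‖ := norm_pos_iff.mpr hw.1
    exact ((decay hw).trans (exp_neg_mul_le_mul_rpow_neg hc (by linarith) hw0)).trans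
      (mul_le_mul_of_nonneg_right (le_max_right _ _) (Real.rpow_nonneg hw0.le _))
  · have : Real.exp (-(c.re * ‖w‖)) ≤ 1 := Real.exp_le_one_iff.mpr (by rw [neg_nonpos]; positivity)
    rw [neg_zero, Real.rpow_zero, mul_one]
    exact (decay hw).trans (this.trans (le_max_left _ _))

lemma tendsto_mellin_exp_neg_mul_smul_comp_div {c s : ℂ} {k : ℝ → E} {k₀ : E} {M : ℝ}
    (hc : 0 < c.re) (hs : 0 < s.re) (hk : ContinuousOn k (Ioi 0)) (hM : ∀ r, 0 < r → ‖k r‖ ≤ M)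
    (hk₀ : Tendsto k (𝓝[>] 0) (𝓝 k₀)) :
    Tendsto (fun z : ℝ ↦ mellin (fun r ↦ cexp (-(c * r)) • k (r / z)) s) atTop
      (𝓝 (mellin (fun r : ℝ ↦ cexp (-(c * r)) • k₀) s)) := by
  have dominant : IntegrableOn (fun r ↦ r ^ (s.re - 1) * Real.exp (-c.re * r) * M) (Ioi 0) := by
    have := integrableOn_rpow_mul_exp_neg_mul_rpow (by linarith : -1 < s.re - 1) one_pos hc
    simp only [Real.rpow_one] at this
    exact this.mul_const M
  refine tendsto_integral_filter_of_dominated_convergence _ ?_ ?_ dominant ?_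
  · filter_upwards [eventually_gt_atTop 0] with z hz
    refine ContinuousOn.aestronglyMeasurable (fun r hr ↦ ?_) measurableSet_Ioi
    have hkr : ContinuousAt (fun r : ℝ ↦ k (r / z)) r :=
      (hk.continuousAt (Ioi_mem_nhds (div_pos hr hz))).comp (f := fun r : ℝ ↦ r / z) (by fun_prop)
    have hpow : ContinuousAt (fun r : ℝ ↦ (r : ℂ) ^ (s - 1)) r :=
      continuousAt_ofReal_cpow_const r (s - 1) (.inr (ne_of_gt hr))
    exact (hpow.smul (.smul (by fun_prop) hkr)).continuousWithinAt
  · filter_upwards [eventually_gt_atTop 0] with z hz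
    filter_upwards [ae_restrict_mem measurableSet_Ioi] with r hr
    rw [norm_smul, norm_smul, norm_cpow_eq_rpow_re_of_pos hr, norm_exp, ← mul_assoc]
    simp only [sub_re, one_re, neg_re, re_mul_ofReal, neg_mul]
    have := mem_Ioi.mp hr
    gcongr
    exact hM _ (div_pos hr hz)
  · filter_upwards [ae_restrict_mem measurableSet_Ioi] with r hr
    have : Tendsto (fun z : ℝ ↦ r / z) atTop (𝓝[>] 0) :=
      tendsto_nhdsWithin_iff.mpr ⟨tendsto_const_nhds.div_atTop tendsto_id,
        (eventually_gt_atTop 0).mono fun z hz ↦ div_pos hr hz⟩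
    exact ((hk₀.comp this).const_smul _).const_smul _

/-- Watson's lemma, to leading order. -/
theorem tendsto_cpow_smul_mellin_exp_neg_mul_smul [CompleteSpace E] {c s : ℂ} {k : ℝ → E} {k₀ : E}
    {M : ℝ} (hc : 0 < c.re) (hs : 0 < s.re) (hk : ContinuousOn k (Ioi 0))
    (hM : ∀ r, 0 < r → ‖k r‖ ≤ M) (hk₀ : Tendsto k (𝓝[>] 0) (𝓝 k₀)) :
    Tendsto (fun z : ℝ ↦ (z : ℂ) ^ s • mellin (fun t ↦ cexp (-(c * (z * t : ℝ))) • k t) s) atTop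
      (𝓝 (((1 / c) ^ s * Gamma s) • k₀)) := by
  have rescale {z : ℝ} (hz : 0 < z) :
      mellin (fun r ↦ cexp (-(c * r)) • k (r / z)) s =
        (z : ℂ) ^ s • mellin (fun t ↦ cexp (-(c * (z * t : ℝ))) • k t) s := by
    have := mellin_comp_mul_left (fun r ↦ cexp (-(c * r)) • k (r / z)) s hz
    simp only [mul_div_cancel_left₀ _ hz.ne'] at this
    rw [this, smul_smul, ← cpow_add _ _ (ofReal_ne_zero.mpr hz.ne'), add_neg_cancel, cpow_zero,
      one_smul]
  have value : mellin (fun r : ℝ ↦ cexp (-(c * r)) • k₀) s = ((1 / c) ^ s * Gamma s) • k₀ := by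
    rw [← mellin_exp_neg_mul hc hs, mellin, mellin, ← _root_.integral_smul_const]
    simp only [smul_assoc]
  rw [← value]
  exact (tendsto_mellin_exp_neg_mul_smul_comp_div hc hs hk hM hk₀).congr'
    ((eventually_gt_atTop 0).mono fun z hz ↦ rescale hz)

lemma norm_exp_mul_mul_I_le_one {α z : ℝ} (hα : α ∈ Icc 0 π) (hz : 0 ≤ z) {w : ℂ}
    (hw : w ∈ puncturedSector α) : ‖cexp (z * w * I)‖ ≤ 1 := by
  have harg := hw.2
  rw [uIcc_of_le hα.1] at harg
  have him : 0 ≤ w.im := by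
    rw [← norm_mul_sin_arg]
    exact mul_nonneg (norm_nonneg w)
      (Real.sin_nonneg_of_nonneg_of_le_pi harg.1 (harg.2.trans hα.2))
  rw [norm_exp, Real.exp_le_one_iff, mul_I_re, im_ofReal_mul, neg_nonpos]
  exact mul_nonneg hz him

lemma mellin_exp_mul_I_smul_eq_rotate {α b M z : ℝ} {s : ℂ} {h : ℂ → E} (hα : α ∈ Ico 0 π)
    (hz : 0 ≤ z) (hs : 0 < s.re) (hsb : s.re < b) (hd : DifferentiableOn ℂ h (puncturedSector α))
    (hM : ∀ w ∈ puncturedSector α, ‖h w‖ ≤ M)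
    (hdecay : ∀ w ∈ puncturedSector α, ‖h w‖ ≤ M * ‖w‖ ^ (-b)) :
    mellin (fun t ↦ cexp (z * t * I) • h t) s =
      cexp (s * (α * I)) •
        mellin (fun r ↦ cexp (-(-(I * cexp (α * I)) * (z * r : ℝ))) • h (r * cexp (α * I))) s := by
  have norm_le {w : ℂ} (hw : w ∈ puncturedSector α) : ‖cexp (z * w * I) • h w‖ ≤ ‖h w‖ := by
    rw [norm_smul]
    exact mul_le_of_le_one_left (norm_nonneg _)
      (norm_exp_mul_mul_I_le_one (Ico_subset_Icc_self hα) hz hw)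
  rw [mellin_eq_smul_mellin_rotate (φ := fun w ↦ cexp (z * w * I) • h w) (b := 0)
    ((abs_of_nonneg hα.1).trans_lt hα.2) (.smul (by fun_prop) hd)
    (fun w hw ↦ (norm_le hw).trans (hdecay w hw))
    (fun w hw ↦ (norm_le hw).trans (by simpa using hM w hw)) hs hsb]
  congr! 5
  push_cast
  ring

lemma one_div_neg_I_mul_exp_cpow {α : ℝ} (hα : α ∈ Ioo 0 π) (s : ℂ) :
    (1 / -(I * cexp (α * I))) ^ s = cexp (s * ((π / 2 - α) * I)) := by
  have : 1 / -(I * cexp (α * I)) = cexp ((π / 2 - α : ℝ) * I) := by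
    rw [ofReal_sub, sub_mul, exp_sub, ofReal_div, ofReal_ofNat, exp_pi_div_two_mul_I, div_neg,
      ← neg_div, mul_comm I, ← div_div, div_I]
    ring
  rw [this, cpow_def_of_ne_zero (exp_ne_zero _), log_exp (by simp; linarith [hα.1, hα.2])
    (by simp; linarith [hα.1, hα.2, Real.pi_pos])]
  push_cast
  ring_nf

theorem tendsto_cpow_smul_mellin_exp_mul_I_smul [CompleteSpace E] {α b M : ℝ} {s : ℂ} {h : ℂ → E}
    {h₀ : E} (hα : α ∈ Ioo 0 π) (hs : 0 < s.re) (hsb : s.re < b)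
    (hd : DifferentiableOn ℂ h (puncturedSector α)) (hM : ∀ w ∈ puncturedSector α, ‖h w‖ ≤ M)
    (hdecay : ∀ w ∈ puncturedSector α, ‖h w‖ ≤ M * ‖w‖ ^ (-b))
    (hh₀ : Tendsto h (𝓝[puncturedSector α] 0) (𝓝 h₀)) :
    Tendsto (fun z : ℝ ↦ (z : ℂ) ^ s • mellin (fun t ↦ cexp (z * t * I) • h t) s) atTop
      (𝓝 ((cexp (s * (π / 2 * I)) * Gamma s) • h₀)) := by
  have ray {r : ℝ} (hr : 0 < r) : r * cexp (α * I) ∈ puncturedSector α :=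
    .ofReal_mul_exp_mem ((abs_of_pos hα.1).trans_lt hα.2) hr right_mem_uIcc
  have damped : 0 < (-(I * cexp (α * I))).re := by
    simpa [exp_ofReal_mul_I_im] using Real.sin_pos_of_mem_Ioo hα
  have to_vertex :
      Tendsto (fun r : ℝ ↦ r * cexp (α * I)) (𝓝[>] 0) (𝓝[puncturedSector α] 0) := by
    refine tendsto_nhdsWithin_iff.mpr ⟨?_, eventually_mem_nhdsWithin.mono fun r hr ↦ ray hr⟩
    have : Continuous fun r : ℝ ↦ r * cexp (α * I) := by fun_prop
    simpa using (this.tendsto 0).mono_left nhdsWithin_le_nhds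
  have watson := (tendsto_cpow_smul_mellin_exp_neg_mul_smul damped hs
    (hd.continuousOn.comp (by fun_prop) fun r hr ↦ ray hr) (fun r hr ↦ hM _ (ray hr))
    (hh₀.comp to_vertex)).const_smul (cexp (s * (α * I)))
  have phase : cexp (s * (α * I)) * (1 / -(I * cexp (α * I))) ^ s = cexp (s * (π / 2 * I)) := by
    rw [one_div_neg_I_mul_exp_cpow hα, ← exp_add]
    ring_nf
  rw [← phase, mul_assoc, mul_smul]
  refine watson.congr' ((eventually_ge_atTop 0).mono fun z hz ↦ ?_)
  simp only [mellin_exp_mul_I_smul_eq_rotate (Ioo_subset_Ico_self hα) hz hs hsb hd hM hdecay,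
    Function.comp_def, smul_comm (cexp (s * (α * I)))]

lemma cos_half_pos_of_abs_lt_pi {β : ℝ} (hβ : |β| < π) : 0 < Real.cos (β / 2) := by
  obtain ⟨hl, hr⟩ := abs_lt.mp hβ
  exact Real.cos_pos_of_mem_Ioo ⟨by linarith, by linarith⟩

/-- The generalized Cauchy function `(1 + w ^ d) ^ (-p)`, with principal powers. Up to the factor
`λδ t ^ (λδ - 1)`, its restriction to the half-line with `d = δ`, `p = λ + 1` is minus the
derivative of the Dagum function. -/
noncomputable def generalizedCauchy (d p : ℝ) (w : ℂ) : ℂ := (1 + w ^ (d : ℂ)) ^ (-p : ℂ)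

namespace generalizedCauchy

variable {d p α : ℝ}

lemma ofReal {t : ℝ} (ht : 0 ≤ t) : generalizedCauchy d p t = ((1 + t ^ d) ^ (-p) : ℝ) := by
  rw [generalizedCauchy, ofReal_cpow (by positivity), ofReal_add, ofReal_cpow ht, ofReal_one,
    ofReal_neg]

lemma differentiableOn (hα : |α| < π) (hdα : |d * α| < π) :
    DifferentiableOn ℂ (generalizedCauchy d p) (puncturedSector α) := by
  intro w hw
  have hpow : DifferentiableAt ℂ (fun w : ℂ ↦ w ^ (d : ℂ)) w :=
    differentiableAt_id.cpow_const (puncturedSector.subset_slitPlane hα hw)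
  exact ((hpow.const_add 1).cpow_const (puncturedSector.one_add_mem_slitPlane hdα
    (puncturedSector.cpow_mem hdα hw))).differentiableWithinAt

lemma norm_le (hp : 0 ≤ p) (hdα : |d * α| < π) {w : ℂ} (hw : w ∈ puncturedSector α) :
    ‖generalizedCauchy d p w‖ ≤ Real.cos (d * α / 2) ^ (-p) * (1 + ‖w‖ ^ d) ^ (-p) := by
  have := puncturedSector.cos_mul_one_add_norm_le hdα (puncturedSector.cpow_mem hdα hw)
  rw [norm_cpow_real] at this
  rw [generalizedCauchy, ← ofReal_neg, norm_cpow_real,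
    ← Real.mul_rpow (cos_half_pos_of_abs_lt_pi hdα).le (by positivity)]
  have hcos := cos_half_pos_of_abs_lt_pi hdα
  exact Real.rpow_le_rpow_of_nonpos (by positivity) this (by linarith)

lemma one_add_rpow_neg_le_one (hp : 0 ≤ p) {t : ℝ} (ht : 0 ≤ t) : (1 + t ^ d) ^ (-p) ≤ 1 :=
  Real.rpow_le_one_of_one_le_of_nonpos (le_add_of_nonneg_right (by positivity)) (by linarith)

lemma one_add_rpow_neg_le_rpow (hp : 0 ≤ p) {t : ℝ} (ht : 0 < t) :
    (1 + t ^ d) ^ (-p) ≤ t ^ (-(d * p)) := by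
  rw [← mul_neg, Real.rpow_mul ht.le]
  exact Real.rpow_le_rpow_of_nonpos (by positivity) (by linarith) (by linarith)

lemma tendsto_zero (hd : 0 < d) (s : Set ℂ) :
    Tendsto (generalizedCauchy d p) (𝓝[s] 0) (𝓝 1) := by
  have hpow : Tendsto (fun w : ℂ ↦ w ^ (d : ℂ)) (𝓝 0) (𝓝 0) := by
    simpa [ContinuousAt, hd.ne'] using continuousAt_cpow_const_of_re_pos (z := 0) (w := d)
      (by simp) (by simpa using hd)
  have hbase : Tendsto (fun v : ℂ ↦ (1 + v) ^ (-p : ℂ)) (𝓝 0) (𝓝 1) := by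
    have : ContinuousAt (fun v : ℂ ↦ (1 + v) ^ (-p : ℂ)) 0 :=
      ContinuousAt.cpow (by fun_prop) continuousAt_const (by simp)
    simpa using this.tendsto
  exact (hbase.comp hpow).mono_left nhdsWithin_le_nhds

end generalizedCauchy

lemma integrableOn_rpow_mul_one_add_rpow_neg {a d p : ℝ} (ha : 0 < a) (hp : 0 ≤ p)
    (hadp : a < d * p) :
    IntegrableOn (fun t : ℝ ↦ t ^ (a - 1) * (1 + t ^ d) ^ (-p)) (Ioi 0) := by
  have hcont : ContinuousOn (fun t : ℝ ↦ (1 + t ^ d) ^ (-p)) (Ioi 0) := fun t ht ↦ by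
    have ht := mem_Ioi.mp ht
    exact (((Real.continuousAt_rpow_const _ _ (.inl ht.ne')).const_add 1).rpow_const
      (.inl (by positivity))).continuousWithinAt
  refine mellin_convergent_of_isBigO_scalar (a := d * p) (b := 0)
    (hcont.locallyIntegrableOn measurableSet_Ioi) ?_ hadp ?_ ha
  · refine .of_bound 1 ((eventually_gt_atTop 0).mono fun t ht ↦ ?_)
    rw [one_mul, Real.norm_of_nonneg (by positivity), Real.norm_of_nonneg (by positivity)]
    exact generalizedCauchy.one_add_rpow_neg_le_rpow hp ht
  · refine .of_bound 1 (eventually_mem_nhdsWithin.mono fun t ht ↦ ?_)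
    have ht := mem_Ioi.mp ht
    rw [neg_zero, Real.rpow_zero, norm_one, one_mul, Real.norm_of_nonneg (by positivity)]
    exact generalizedCauchy.one_add_rpow_neg_le_one hp ht.le

lemma im_mellin_exp_mul_I_mul {a : ℝ} {g : ℝ → ℝ}
    (hg : IntegrableOn (fun t ↦ t ^ (a - 1) * g t) (Ioi 0)) (z : ℝ) :
    (mellin (fun t ↦ cexp (z * t * I) * g t) a).im =
      ∫ t in Ioi 0, Real.sin (z * t) * (t ^ (a - 1) * g t) := by
  have hint : IntegrableOn (fun t : ℝ ↦ cexp (z * t * I) * (t ^ (a - 1) * g t : ℝ)) (Ioi 0) :=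
    hg.ofReal.bdd_mul (c := 1) (by fun_prop)
      (.of_forall fun t ↦ by rw [← ofReal_mul, norm_exp_ofReal_mul_I])
  have hmellin : mellin (fun t ↦ cexp (z * t * I) * g t) a =
      ∫ t in Ioi (0 : ℝ), cexp (z * t * I) * (t ^ (a - 1) * g t : ℝ) := by
    refine setIntegral_congr_fun measurableSet_Ioi fun t ht ↦ ?_
    simp only [smul_eq_mul, ofReal_mul, ofReal_cpow (mem_Ioi.mp ht).le, ofReal_sub, ofReal_one]
    ring
  rw [hmellin, ← imCLM_apply, ← imCLM.integral_comp_comm hint]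
  simp only [imCLM_apply, im_mul_ofReal, ← ofReal_mul z, exp_ofReal_mul_I_im]

theorem tendsto_rpow_mul_integral_sin_mul_one_add_rpow {a d p : ℝ} (hd : 0 < d) (hp : 0 ≤ p)
    (ha : 0 < a) (hadp : a < d * p) :
    Tendsto (fun z : ℝ ↦ z ^ a *
        ∫ t in Ioi 0, Real.sin (z * t) * (t ^ (a - 1) * (1 + t ^ d) ^ (-p))) atTop
      (𝓝 (Real.sin (a * (π / 2)) * Real.Gamma a)) := by
  obtain ⟨α, hα, hdα⟩ : ∃ α ∈ Ioo 0 π, |d * α| < π := by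
    refine ⟨π / (d + 1), ⟨by positivity, div_lt_self Real.pi_pos (by linarith)⟩, ?_⟩
    rw [abs_of_pos (by positivity), mul_div_left_comm]
    exact mul_lt_of_lt_one_right Real.pi_pos ((div_lt_one (by positivity)).mpr (by linarith))
  have hM := Real.rpow_nonneg (cos_half_pos_of_abs_lt_pi hdα).le (-p)
  have asymptotics := tendsto_cpow_smul_mellin_exp_mul_I_smul (s := a) hα ha hadp
    (generalizedCauchy.differentiableOn ((abs_of_pos hα.1).trans_lt hα.2) hdα)
    (fun w hw ↦ (generalizedCauchy.norm_le hp hdα hw).trans (mul_le_of_le_one_right hM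
      (generalizedCauchy.one_add_rpow_neg_le_one hp (norm_nonneg w))))
    (fun w hw ↦ (generalizedCauchy.norm_le hp hdα hw).trans (mul_le_mul_of_nonneg_left
      (generalizedCauchy.one_add_rpow_neg_le_rpow hp (norm_pos_iff.mpr hw.1)) hM))
    (generalizedCauchy.tendsto_zero hd _)
  have im_limit : (cexp (a * (π / 2 * I)) * Gamma a * 1).im =
      Real.sin (a * (π / 2)) * Real.Gamma a := by
    rw [mul_one, Gamma_ofReal, im_mul_ofReal, ← exp_ofReal_mul_I_im]
    push_cast
    ring_nf
  have restrict (z : ℝ) : mellin (fun t ↦ cexp (z * t * I) • generalizedCauchy d p t) a =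
      mellin (fun t ↦ cexp (z * t * I) * ((1 + t ^ d) ^ (-p) : ℝ)) a :=
    setIntegral_congr_fun measurableSet_Ioi fun t ht ↦ by
      simp only [generalizedCauchy.ofReal (mem_Ioi.mp ht).le, smul_eq_mul]
  rw [← im_limit]
  refine ((continuous_im.tendsto _).comp asymptotics).congr' ?_
  filter_upwards [eventually_ge_atTop 0] with z hz
  rw [← im_mellin_exp_mul_I_mul (integrableOn_rpow_mul_one_add_rpow_neg ha hp hadp),
    ← im_ofReal_mul, ofReal_cpow hz, ← restrict, Function.comp_apply, smul_eq_mul]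

end ContourShift

theorem tendsto_intervalIntegral_cos_mul {F F' : ℝ → ℝ} {z : ℝ} (hz : z ≠ 0)
    (hcont : ContinuousOn F (Ici 0)) (hderiv : ∀ t, 0 < t → HasDerivAt F (F' t) t)
    (hint : IntegrableOn F' (Ioi 0)) (hlim : Tendsto F atTop (𝓝 0)) :
    Tendsto (fun T ↦ ∫ t in (0 : ℝ)..T, Real.cos (z * t) * F t) atTop
      (𝓝 (-(z⁻¹ * ∫ t in Ioi 0, Real.sin (z * t) * F' t))) := by
  have by_parts {T : ℝ} (hT : 0 ≤ T) : ∫ t in (0 : ℝ)..T, Real.cos (z * t) * F t =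
      F T * (z⁻¹ * Real.sin (z * T)) - z⁻¹ * ∫ t in (0 : ℝ)..T, Real.sin (z * t) * F' t := by
    have hsin (t : ℝ) : HasDerivAt (fun t ↦ z⁻¹ * Real.sin (z * t)) (Real.cos (z * t)) t := by
      refine (((hasDerivAt_id t).const_mul z).sin.const_mul z⁻¹).congr_deriv ?_
      simp [mul_comm _ z, inv_mul_cancel_left₀ hz]
    have := integral_mul_deriv_eq_deriv_mul_of_hasDerivAt (u := F) (a := 0) (b := T)
      (hcont.mono (by rw [uIcc_of_le hT]; exact Icc_subset_Ici_self)) (by fun_prop)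
      (fun t ht ↦ hderiv t (by simpa [hT] using ht.1)) (fun t _ ↦ hsin t)
      ((intervalIntegrable_iff_integrableOn_Ioc_of_le hT).mpr
        (hint.mono_set Ioc_subset_Ioi_self))
      (Continuous.intervalIntegrable (by fun_prop) _ _)
    rw [← intervalIntegral.integral_const_mul]
    simpa only [mul_comm, mul_left_comm, zero_mul, mul_zero, Real.sin_zero, sub_zero] using this
  have boundary : Tendsto (fun T ↦ F T * (z⁻¹ * Real.sin (z * T))) atTop (𝓝 0) := by
    refine hlim.zero_mul_isBoundedUnder_le (isBoundedUnder_of ⟨|z⁻¹|, fun T ↦ ?_⟩)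
    simpa [abs_mul] using mul_le_of_le_one_right (abs_nonneg z⁻¹) (Real.abs_sin_le_one (z * T))
  have sine : Tendsto (fun T ↦ ∫ t in (0 : ℝ)..T, Real.sin (z * t) * F' t) atTop
      (𝓝 (∫ t in Ioi 0, Real.sin (z * t) * F' t)) :=
    intervalIntegral_tendsto_integral_Ioi 0
      (hint.bdd_mul (c := 1) (by fun_prop) (.of_forall fun t ↦ Real.abs_sin_le_one _)) tendsto_id
  rw [← zero_sub]
  exact (boundary.sub (sine.const_mul z⁻¹)).congr'
    ((eventually_ge_atTop 0).mono fun T hT ↦ (by_parts hT).symm)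

namespace dagum

variable {lam δ : ℝ}

protected lemma hasDerivAt {t : ℝ} (ht : 0 < t) :
    HasDerivAt (dagum lam δ)
      (-(δ * lam) * (t ^ (δ * lam - 1) * (1 + t ^ δ) ^ (-(lam + 1)))) t := by
  have hpos : 0 < t ^ δ := by positivity
  have hpow : HasDerivAt (fun x : ℝ ↦ x ^ δ) (δ * t ^ (δ - 1)) t :=
    Real.hasDerivAt_rpow_const (.inl ht.ne')
  have hdagum := ((hpow.fun_div (hpow.const_add 1) (by positivity)).rpow_const (p := lam)
    (.inl (by positivity))).const_sub 1
  refine hdagum.congr_deriv ?_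
  have hsplit_num : t ^ (δ * lam - 1) = t ^ (δ * (lam - 1)) * t ^ (δ - 1) := by
    rw [← Real.rpow_add ht]; ring_nf
  have hsplit_den : (1 + t ^ δ) ^ (-(lam + 1)) =
      ((1 + t ^ δ) ^ (lam - 1))⁻¹ * ((1 + t ^ δ) ^ 2)⁻¹ := by
    rw [← Real.rpow_natCast, ← Real.rpow_neg (by positivity), ← Real.rpow_neg (by positivity),
      ← Real.rpow_add (by positivity)]
    push_cast
    ring_nf
  rw [Real.div_rpow hpos.le (by positivity), ← Real.rpow_mul ht.le, hsplit_num,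
    hsplit_den]
  field_simp
  ring

protected lemma continuousOn (hδ : 0 ≤ δ) (hlam : 0 ≤ lam) :
    ContinuousOn (dagum lam δ) (Ici 0) := by
  have hpow : Continuous fun t : ℝ ↦ t ^ δ := Real.continuous_rpow_const hδ
  refine continuousOn_const.sub (.rpow_const (hpow.continuousOn.div (by fun_prop) fun t ht ↦ ?_)
    fun _ _ ↦ .inr hlam)
  have := Real.rpow_nonneg ht δ
  positivity

lemma tendsto_atTop (hδ : 0 < δ) (hlam : 0 ≤ lam) : Tendsto (dagum lam δ) atTop (𝓝 0) := by
  have hratio : Tendsto (fun t : ℝ ↦ t ^ δ / (1 + t ^ δ)) atTop (𝓝 1) := by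
    have : Tendsto (fun t : ℝ ↦ 1 - (1 + t ^ δ)⁻¹) atTop (𝓝 (1 - 0)) :=
      tendsto_const_nhds.sub (tendsto_inv_atTop_zero.comp
        (tendsto_atTop_add_const_left _ _ (tendsto_rpow_atTop hδ)))
    rw [sub_zero] at this
    refine this.congr' ((eventually_ge_atTop 0).mono fun t ht ↦ ?_)
    have := Real.rpow_nonneg ht δ
    field_simp
    ring
  have : Tendsto (fun t : ℝ ↦ 1 - (t ^ δ / (1 + t ^ δ)) ^ lam) atTop (𝓝 0) := by
    simpa using (hratio.rpow_const (p := lam) (.inr hlam)).const_sub 1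
  exact this

lemma tendsto_integral_cos_mul (hδ : 0 < δ) (hlam : 0 < lam) {z : ℝ} (hz : z ≠ 0) :
    Tendsto (fun T ↦ ∫ t in (0 : ℝ)..T, Real.cos (z * t) * dagum lam δ t) atTop
      (𝓝 (z⁻¹ * (δ * lam *
        ∫ t in Ioi 0, Real.sin (z * t) * (t ^ (δ * lam - 1) * (1 + t ^ δ) ^ (-(lam + 1)))))) := by
  convert tendsto_intervalIntegral_cos_mul hz (dagum.continuousOn hδ.le hlam.le)
    (fun t ht ↦ dagum.hasDerivAt ht) ((integrableOn_rpow_mul_one_add_rpow_neg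
      (by positivity) (by positivity) (by linarith)).const_mul _) (tendsto_atTop hδ hlam.le) using 2
  simp only [mul_left_comm (Real.sin _) (-(δ * lam)), MeasureTheory.integral_const_mul]
  ring

end dagum

lemma one_div_pi_mul_sin_mul_Gamma {a : ℝ} (ha : 0 < a) (hpole : ∀ n : ℕ, 1 - a / 2 ≠ -n) :
    1 / π * (a * (Real.sin (a * (π / 2)) * Real.Gamma a)) =
      2 ^ (a - 1) * a * Real.Gamma ((1 + a) / 2) / (√π * Real.Gamma (1 - a / 2)) := by
  have duplication := Real.Gamma_mul_Gamma_add_half (a / 2)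
  have reflection := Real.Gamma_mul_Gamma_one_sub (a / 2)
  rw [show a / 2 + 1 / 2 = (1 + a) / 2 by ring, show 2 * (a / 2) = a by ring] at duplication
  have hΓ : Real.Gamma (a / 2) ≠ 0 := (Real.Gamma_pos_of_pos (by positivity)).ne'
  have hΓ_one_sub : Real.Gamma (1 - a / 2) ≠ 0 := Real.Gamma_ne_zero hpole
  have hsin : Real.sin (π * (a / 2)) ≠ 0 := fun h ↦ by simp [h, hΓ, hΓ_one_sub] at reflection
  have hpow : (2 : ℝ) ^ (1 - a) * 2 ^ (a - 1) = 1 := by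
    rw [← Real.rpow_add two_pos]; simp
  rw [show a * (π / 2) = π * (a / 2) by ring]
  have hΓ_half : Real.Gamma ((1 + a) / 2) =
      Real.Gamma a * 2 ^ (1 - a) * √π / Real.Gamma (a / 2) := by
    rw [← duplication]; field_simp
  have hΓ_compl : Real.Gamma (1 - a / 2) = π / Real.sin (π * (a / 2)) / Real.Gamma (a / 2) := by
    rw [← reflection]; field_simp
  rw [hΓ_half, hΓ_compl]
  field_simp [hsin]
  linear_combination -Real.sin (π * a / 2) * hpow

theorem dagum_high_frequency_dim_one_general (δ lam : ℝ) (hδ : 0 < δ) (hlam : 0 < lam)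
    (hpole : ∀ n : ℕ, 1 - lam * δ / 2 ≠ -n) :
    ∃ Dh : ℝ → ℝ,
      (∀ z : ℝ, 0 < z →
        Tendsto (fun T : ℝ => (1 / Real.pi) * ∫ t in (0 : ℝ)..T, Real.cos (z * t) * dagum lam δ t)
          atTop (nhds (Dh z))) ∧
      Tendsto (fun z : ℝ => z ^ (1 + δ * lam) * Dh z) atTop
        (nhds (2 ^ (δ * lam - 1) * lam * δ * Real.Gamma ((1 + lam * δ) / 2) /
          (Real.sqrt Real.pi * Real.Gamma (1 - lam * δ / 2)))) := by
  have ha : 0 < δ * lam := by positivity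
  refine ⟨_, fun z hz ↦ (dagum.tendsto_integral_cos_mul hδ hlam hz.ne').const_mul _, ?_⟩
  have asymptotics := ((tendsto_rpow_mul_integral_sin_mul_one_add_rpow hδ
    (by positivity : 0 ≤ lam + 1) ha (by linarith)).const_mul (δ * lam)).const_mul (1 / π)
  rw [mul_comm lam δ] at hpole
  rw [one_div_pi_mul_sin_mul_Gamma ha hpole] at asymptotics
  rw [mul_comm lam δ, mul_assoc _ lam δ, mul_comm lam δ]
  refine asymptotics.congr' ((eventually_gt_atTop 0).mono fun z hz ↦ ?_)
  simp only [Real.rpow_add hz, Real.rpow_one]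
  field_simp

/-- High-frequency behaviour in dimension `d = 1` for `δ ∈ (0,2)`, `δλ ∈ (0,2)`:
the improper integral `\widehat D(z) = (1/π) lim_{T→∞} ∫₀^T cos(zt) D_{λ,δ}(t) dt`
exists for every `z > 0`, and
`z^{1+δλ} \widehat D(z) → 2^{δλ-1} λ δ Γ((1+λδ)/2)/(√π Γ(1-λδ/2))` as `z → ∞`. -/
theorem dagum_high_frequency_dim_one (δ lam : ℝ) (hδ0 : 0 < δ) (hδ2 : δ < 2)
    (hlam : 0 < lam) (hdl0 : 0 < δ * lam) (hdl2 : δ * lam < 2) :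
    ∃ Dh : ℝ → ℝ,
      (∀ z : ℝ, 0 < z →
        Tendsto (fun T : ℝ => (1 / Real.pi) * ∫ t in (0 : ℝ)..T, Real.cos (z * t) * dagum lam δ t)
          atTop (nhds (Dh z))) ∧
      Tendsto (fun z : ℝ => z ^ (1 + δ * lam) * Dh z) atTop
        (nhds (2 ^ (δ * lam - 1) * lam * δ * Real.Gamma ((1 + lam * δ) / 2) /
          (Real.sqrt Real.pi * Real.Gamma (1 - lam * δ / 2)))) := by
  refine dagum_high_frequency_dim_one_general δ lam hδ0 hlam fun n h ↦ ?_
  linarith [n.cast_nonneg (α := ℝ)]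
end

section
/- Let d = 3, δ ∈ (1,2), λ > 0 with δλ ∈ (0,2). Then for every z > 0 the improper integral \widehat{D}_3(z) = (1/(2π² z)) lim_{T→∞} ∫₀^T r sin(z r) D_{λ,δ}(r) dr exists, and z^{3+δλ} \widehat{D}_3(z) → 2^{δλ−1} λ δ Γ((3+λδ)/2) / ( π^{3/2} Γ(1−λδ/2) ) as z → ∞. -/
open MeasureTheory Set Filter intervalIntegral

/-!
The sine transform is the imaginary part of `∫ ζ D(ζ) e^{izζ} dζ` along the positive real axis. For
`δ < 2` the power `ζ^δ` avoids the negative axis in the right half plane, so `D` is holomorphic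
there and Cauchy's theorem rotates the contour onto the positive imaginary axis; for `1 < δ` we have
`ζ D(ζ) → 0` at infinity, and the far sides of the square vanish. On the imaginary axis `ζ = iy` the
oscillation becomes the decay `e^{-zy}`, and since `D(iy) = 1 - (iy)^{δλ} (1 + o(1))` near `0`, the
integrand that contributes is asymptotic to `sin(πδλ/2) y^{1+δλ} e^{-zy}`. Watson's lemma gives the
limit `Γ(2+δλ) sin(πδλ/2) / (2π²)`, which reflection and duplication of `Γ` bring to the form of
the theorem.
-/

section QuadrantRotation

open Complex Topology Bornology

variable {E : Type*} [NormedAddCommGroup E]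

lemma eventually_norm_le_of_tendsto_cobounded {F : Type*} [NormedAddCommGroup F] {f : F → E}
    {S : Set F} (hf : Tendsto f (cobounded F ⊓ 𝓟 S) (𝓝 0)) {ε : ℝ} (hε : 0 < ε) :
    ∀ᶠ R : ℝ in atTop, ∀ ζ ∈ S, R ≤ ‖ζ‖ → ‖f ζ‖ ≤ ε := by
  have hsmall : ∀ᶠ ζ in cobounded F, ζ ∈ S → ‖f ζ‖ ≤ ε :=
    eventually_inf_principal.1 <| (tendsto_zero_iff_norm_tendsto_zero.1 hf).eventually_le_const hε
  obtain ⟨R₀, -, hR₀⟩ := hasBasis_cobounded_norm.eventually_iff.1 hsmall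
  filter_upwards [eventually_ge_atTop R₀] with R hR ζ hζ hRζ
  exact hR₀ (hR.trans hRζ) hζ

variable [NormedSpace ℂ E] {f : ℂ → E} {z : ℝ}

lemma norm_exp_mul_I_smul (f : ℂ → E) (z : ℝ) (ζ : ℂ) :
    ‖cexp (z * ζ * I) • f ζ‖ = Real.exp (-z * ζ.im) * ‖f ζ‖ := by
  rw [norm_smul, norm_exp]
  simp

lemma exp_mul_I_smul_mul_I (f : ℂ → E) (z y : ℝ) :
    cexp (z * (y * I) * I) • f (y * I) = Real.exp (-(z * y)) • f (y * I) := by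
  rw [← Complex.coe_smul, ofReal_exp]
  congr 2
  push_cast
  linear_combination (z * y : ℂ) * I_mul_I

lemma integrableOn_exp_neg_smul_mul_I (hz : 0 < z) (hfc : ContinuousOn f (Ici 0 ×ℂ Ici 0))
    (hf : Tendsto f (cobounded ℂ ⊓ 𝓟 (Ici 0 ×ℂ Ici 0)) (𝓝 0)) :
    IntegrableOn (fun y : ℝ => Real.exp (-(z * y)) • f (y * I)) (Ioi 0) := by
  have hcont : ContinuousOn (fun y : ℝ => Real.exp (-(z * y)) • f (y * I)) (Ici 0) := by
    have hexp : Continuous fun y : ℝ => Real.exp (-(z * y)) := by fun_prop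
    refine hexp.continuousOn.smul (hfc.comp (by fun_prop) fun y hy => ?_)
    simpa [mem_reProdIm] using hy
  have hdecay : (fun y : ℝ => Real.exp (-(z * y)) • f (y * I)) =O[atTop]
      fun y => Real.exp (-z * y) := by
    refine Asymptotics.IsBigO.of_bound 1 ?_
    filter_upwards [eventually_norm_le_of_tendsto_cobounded hf one_pos, eventually_ge_atTop 0]
      with y hy hy0
    have hfy : ‖f (y * I)‖ ≤ 1 := hy _ (by simpa [mem_reProdIm]) (by simp [abs_of_nonneg hy0])
    rw [norm_smul, mul_comm, neg_mul]
    gcongr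
  exact (integrableOn_Ici_iff_integrableOn_Ioi (by finiteness)).1 <|
    (hcont.locallyIntegrableOn measurableSet_Ici).integrableOn_of_isBigO_atTop hdecay
      ⟨Ioi 0, Ioi_mem_atTop 0, exp_neg_integrableOn_Ioi 0 hz⟩

lemma tendsto_integral_top_side (hz : 0 < z)
    (hf : Tendsto f (cobounded ℂ ⊓ 𝓟 (Ici 0 ×ℂ Ici 0)) (𝓝 0)) :
    Tendsto (fun R : ℝ => ∫ x in (0 : ℝ)..R, cexp (z * (x + R * I) * I) • f (x + R * I))
      atTop (𝓝 0) := by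
  refine squeeze_zero_norm' ?_ (tendsto_rpow_mul_exp_neg_mul_atTop_nhds_zero 1 z hz)
  filter_upwards [eventually_norm_le_of_tendsto_cobounded hf one_pos, eventually_ge_atTop 0]
    with R hR hR0
  have hbound : ∀ x ∈ uIoc 0 R,
      ‖cexp (z * (x + R * I) * I) • f (x + R * I)‖ ≤ Real.exp (-z * R) := by
    intro x hx
    rw [uIoc_of_le hR0] at hx
    have hRx : R ≤ ‖(x + R * I : ℂ)‖ := by
      simpa using (le_abs_self _).trans (abs_im_le_norm (x + R * I : ℂ))
    have hfx : ‖f (x + R * I)‖ ≤ 1 := hR _ (by simp [mem_reProdIm, hx.1.le, hR0]) hRx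
    rw [norm_exp_mul_I_smul]
    simpa using mul_le_of_le_one_right (Real.exp_pos _).le hfx
  simpa [abs_of_nonneg hR0, mul_comm] using norm_integral_le_of_norm_le_const hbound

lemma tendsto_integral_right_side (hz : 0 < z)
    (hf : Tendsto f (cobounded ℂ ⊓ 𝓟 (Ici 0 ×ℂ Ici 0)) (𝓝 0)) :
    Tendsto (fun R : ℝ => ∫ y in (0 : ℝ)..R, cexp (z * (R + y * I) * I) • f (R + y * I))
      atTop (𝓝 0) := by
  refine NormedAddGroup.tendsto_nhds_zero.2 fun ε hε => ?_
  filter_upwards [eventually_norm_le_of_tendsto_cobounded hf (show 0 < ε * z / 2 by positivity),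
    eventually_ge_atTop 0] with R hR hR0
  have hbound : ∀ y ∈ Ioc 0 R,
      ‖cexp (z * (R + y * I) * I) • f (R + y * I)‖ ≤ Real.exp (-z * y) * (ε * z / 2) := by
    intro y hy
    have hRy : R ≤ ‖(R + y * I : ℂ)‖ := by
      simpa using (le_abs_self _).trans (abs_re_le_norm (R + y * I : ℂ))
    have hfy : ‖f (R + y * I)‖ ≤ ε * z / 2 := hR _ (by simp [mem_reProdIm, hy.1.le, hR0]) hRy
    rw [norm_exp_mul_I_smul]
    simpa using mul_le_mul_of_nonneg_left hfy (Real.exp_pos _).le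
  calc ‖∫ y in (0 : ℝ)..R, cexp (z * (R + y * I) * I) • f (R + y * I)‖
      ≤ ∫ y in (0 : ℝ)..R, Real.exp (-z * y) * (ε * z / 2) :=
        norm_integral_le_of_norm_le hR0 (ae_of_all _ hbound)
          (Continuous.intervalIntegrable (by fun_prop) _ _)
    _ = (1 - Real.exp (-z * R)) * (ε / 2) := by
        rw [intervalIntegral.integral_mul_const,
          intervalIntegral.integral_comp_mul_left Real.exp (neg_ne_zero.2 hz.ne'), integral_exp]
        simp
        field_simp
        ring
    _ ≤ 1 * (ε / 2) := by
        gcongr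
        linarith [Real.exp_pos (-z * R)]
    _ < ε := by linarith

lemma integral_exp_mul_I_smul_eq_of_square [CompleteSpace E] {R : ℝ} (hR : 0 ≤ R)
    (hfc : ContinuousOn f (Ici 0 ×ℂ Ici 0)) (hfd : DifferentiableOn ℂ f (Ioi 0 ×ℂ Ioi 0)) :
    ∫ x in (0 : ℝ)..R, cexp (z * x * I) • f x =
      I • (∫ y in (0 : ℝ)..R, Real.exp (-(z * y)) • f (y * I)) +
        (∫ x in (0 : ℝ)..R, cexp (z * (x + R * I) * I) • f (x + R * I)) -
        I • ∫ y in (0 : ℝ)..R, cexp (z * (R + y * I) * I) • f (R + y * I) := by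
  have hexp : Differentiable ℂ fun ζ : ℂ => cexp (z * ζ * I) := by fun_prop
  have hcauchy := integral_boundary_rect_eq_zero_of_continuousOn_of_differentiableOn
    (fun ζ => cexp (z * ζ * I) • f ζ) 0 (R + R * I) ?_ ?_
  · simp only [zero_re, zero_im, ofReal_zero, zero_mul, add_zero, zero_add, add_re, add_im,
      ofReal_re, ofReal_im, mul_re, mul_im, I_re, I_im, mul_zero, mul_one, sub_zero,
      exp_mul_I_smul_mul_I] at hcauchy
    rw [← sub_eq_zero, ← hcauchy]
    abel
  · refine hexp.continuous.continuousOn.smul (hfc.mono fun ζ hζ => ?_)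
    simp only [zero_re, add_re, ofReal_re, mul_re, I_re, mul_zero, ofReal_im, I_im, mul_one,
      sub_self, add_zero, uIcc_of_le hR, zero_im, add_im, mul_im, zero_add, mem_reProdIm,
      mem_Icc] at hζ
    exact ⟨hζ.1.1, hζ.2.1⟩
  · refine hexp.differentiableOn.smul (hfd.mono fun ζ hζ => ?_)
    simp only [zero_re, add_re, ofReal_re, mul_re, I_re, mul_zero, ofReal_im, I_im, mul_one,
      sub_self, add_zero, hR, inf_of_le_left, sup_of_le_right, zero_im, add_im, mul_im, zero_add,
      mem_reProdIm, mem_Ioo] at hζ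
    exact ⟨hζ.1.1, hζ.2.1⟩

theorem tendsto_integral_exp_mul_I_smul [CompleteSpace E] (hz : 0 < z)
    (hfc : ContinuousOn f (Ici 0 ×ℂ Ici 0)) (hfd : DifferentiableOn ℂ f (Ioi 0 ×ℂ Ioi 0))
    (hf : Tendsto f (cobounded ℂ ⊓ 𝓟 (Ici 0 ×ℂ Ici 0)) (𝓝 0)) :
    Tendsto (fun R : ℝ => ∫ x in (0 : ℝ)..R, cexp (z * x * I) • f x) atTop
      (𝓝 (I • ∫ y in Ioi (0 : ℝ), Real.exp (-(z * y)) • f (y * I))) := by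
  have hleft := intervalIntegral_tendsto_integral_Ioi 0
    (integrableOn_exp_neg_smul_mul_I hz hfc hf) tendsto_id
  have hsides := ((hleft.const_smul I).add (tendsto_integral_top_side hz hf)).sub
    ((tendsto_integral_right_side hz hf).const_smul I)
  rw [smul_zero, sub_zero, add_zero] at hsides
  refine hsides.congr' ?_
  filter_upwards [eventually_ge_atTop 0] with R hR
  exact (integral_exp_mul_I_smul_eq_of_square hR hfc hfd).symm

end QuadrantRotation

section LaplaceAbelian

open Topology

variable {E : Type*} [NormedAddCommGroup E] {h : ℝ → E}

lemma aestronglyMeasurable_comp_inv_mul_Ioi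
    (hm : AEStronglyMeasurable h (volume.restrict (Ioi 0))) {z : ℝ} (hz : 0 < z) :
    AEStronglyMeasurable (fun t => h (z⁻¹ * t)) (volume.restrict (Ioi 0)) :=
  hm.comp_quasiMeasurePreserving <|
    (Measure.quasiMeasurePreserving_smul volume (inv_ne_zero hz.ne')).restrict
      fun _ ht => mul_pos (inv_pos.2 hz) ht

variable [NormedSpace ℝ E] {c : E} {s C : ℝ}

lemma rpow_smul_laplace_eq_integral_comp_inv_mul (h : ℝ → E) (s : ℝ) {z : ℝ} (hz : 0 < z) :
    z ^ s • ∫ y in Ioi (0 : ℝ), (y ^ (s - 1) * Real.exp (-(z * y))) • h y =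
      ∫ t in Ioi (0 : ℝ), (Real.exp (-t) * t ^ (s - 1)) • h (z⁻¹ * t) := by
  have hscale := integral_comp_mul_left_Ioi'
    (fun y => (y ^ (s - 1) * Real.exp (-(z * y))) • h y) 0 (inv_pos.2 hz)
  rw [mul_zero] at hscale
  rw [← hscale, smul_smul, ← MeasureTheory.integral_smul]
  refine setIntegral_congr_fun measurableSet_Ioi fun t ht => ?_
  have ht0 : 0 < t := ht
  simp only [smul_smul]
  congr 1
  rw [mul_inv_cancel_left₀ hz.ne', Real.mul_rpow (inv_pos.2 hz).le ht0.le, Real.inv_rpow hz.le,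
    Real.rpow_sub_one hz.ne']
  field_simp

theorem tendsto_rpow_smul_laplace [CompleteSpace E] (hs : 0 < s)
    (hm : AEStronglyMeasurable h (volume.restrict (Ioi 0)))
    (hC : ∀ y, 0 < y → ‖h y‖ ≤ C) (hc : Tendsto h (𝓝[>] 0) (𝓝 c)) :
    Tendsto (fun z : ℝ => z ^ s • ∫ y in Ioi (0 : ℝ), (y ^ (s - 1) * Real.exp (-(z * y))) • h y)
      atTop (𝓝 (Real.Gamma s • c)) := by
  have hΓ := Real.GammaIntegral_convergent hs
  rw [Real.Gamma_eq_integral hs, ← _root_.integral_smul_const]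
  have hdom : Tendsto (fun z : ℝ => ∫ t in Ioi (0 : ℝ),
      (Real.exp (-t) * t ^ (s - 1)) • h (z⁻¹ * t)) atTop
      (𝓝 (∫ t in Ioi (0 : ℝ), (Real.exp (-t) * t ^ (s - 1)) • c)) := by
    refine MeasureTheory.tendsto_integral_filter_of_dominated_convergence
      (fun t => Real.exp (-t) * t ^ (s - 1) * C) ?_ ?_ (hΓ.mul_const C) ?_
    · filter_upwards [eventually_gt_atTop 0] with z hz
      exact hΓ.aestronglyMeasurable.smul (aestronglyMeasurable_comp_inv_mul_Ioi hm hz)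
    · filter_upwards [eventually_gt_atTop 0] with z hz
      filter_upwards [ae_restrict_mem measurableSet_Ioi] with t ht
      have ht0 : 0 < t := ht
      rw [norm_smul, Real.norm_of_nonneg (by positivity)]
      exact mul_le_mul_of_nonneg_left (hC _ (by positivity)) (by positivity)
    · filter_upwards [ae_restrict_mem measurableSet_Ioi] with t ht
      have hinv : Tendsto (fun z : ℝ => z⁻¹ * t) atTop (𝓝[>] 0) := by
        refine tendsto_nhdsWithin_iff.2 ⟨?_, ?_⟩
        · simpa using tendsto_inv_atTop_zero.mul_const t
        · filter_upwards [eventually_gt_atTop 0] with z hz using mul_pos (inv_pos.2 hz) ht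
      exact (hc.comp hinv).const_smul _
  refine hdom.congr' ?_
  filter_upwards [eventually_gt_atTop 0] with z hz
  exact (rpow_smul_laplace_eq_integral_comp_inv_mul h s hz).symm

end LaplaceAbelian

section ComplexPowers

open Complex Topology

lemma mem_slitPlane_of_re_nonneg {ζ : ℂ} (h0 : ζ ≠ 0) (hre : 0 ≤ ζ.re) : ζ ∈ slitPlane := by
  rw [mem_slitPlane_iff]
  by_contra! h
  exact h0 (Complex.ext (h.1.antisymm hre) h.2)

lemma one_add_mem_slitPlane {w : ℂ} (hw : w ∈ slitPlane) : 1 + w ∈ slitPlane := by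
  rw [mem_slitPlane_iff] at *
  rw [add_re, add_im, one_re, one_im, zero_add]
  exact hw.imp_left fun h => by linarith

lemma inv_mem_slitPlane {w : ℂ} (hw : w ∈ slitPlane) : w⁻¹ ∈ slitPlane := by
  rw [mem_slitPlane_iff_arg] at *
  rw [arg_inv, if_neg hw.1]
  exact ⟨fun h => by linarith [neg_pi_lt_arg w], inv_ne_zero hw.2⟩

lemma cpow_mem_slitPlane {ζ : ℂ} {a : ℝ} (h0 : ζ ≠ 0) (ha : |arg ζ * a| < Real.pi) :
    ζ ^ (a : ℂ) ∈ slitPlane := by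
  obtain ⟨hlower, hupper⟩ := abs_lt.1 ha
  have him : (log ζ * a).im = arg ζ * a := by simp [log_im]
  have harg : arg (ζ ^ (a : ℂ)) = arg ζ * a := by
    rw [cpow_def_of_ne_zero h0, ← log_im, log_exp (by rwa [him]) (by rw [him]; exact hupper.le),
      him]
  exact mem_slitPlane_iff_arg.2 ⟨harg ▸ hupper.ne, by simp [cpow_eq_zero_iff, h0]⟩

lemma cpow_mem_slitPlane_of_re_nonneg {ζ : ℂ} {a : ℝ} (ha0 : 0 < a) (ha2 : a < 2) (h0 : ζ ≠ 0)
    (hre : 0 ≤ ζ.re) : ζ ^ (a : ℂ) ∈ slitPlane := by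
  refine cpow_mem_slitPlane h0 ?_
  have harg : |arg ζ| ≤ Real.pi / 2 := abs_arg_le_pi_div_two_iff.2 hre
  calc |arg ζ * a| = |arg ζ| * a := by rw [abs_mul, abs_of_pos ha0]
    _ ≤ Real.pi / 2 * a := by gcongr
    _ < Real.pi := by nlinarith [Real.pi_pos]

lemma div_one_add_eq_inv_one_add_inv {w : ℂ} (hw : w ≠ 0) : w / (1 + w) = (1 + w⁻¹)⁻¹ := by
  rw [← one_div, show 1 + w⁻¹ = (1 + w) / w by field_simp; ring, one_div_div]

lemma div_one_add_mem_slitPlane {w : ℂ} (hw : w ∈ slitPlane) : w / (1 + w) ∈ slitPlane := by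
  rw [div_one_add_eq_inv_one_add_inv (slitPlane_ne_zero hw)]
  exact inv_mem_slitPlane (one_add_mem_slitPlane (inv_mem_slitPlane hw))

lemma ofReal_pos_mul_cpow {x : ℝ} (hx : 0 < x) {w : ℂ} (hw : w ≠ 0) (s : ℂ) :
    ((x : ℂ) * w) ^ s = (x : ℂ) ^ s * w ^ s := by
  have hx' : (x : ℂ) ≠ 0 := ofReal_ne_zero.2 hx.ne'
  rw [cpow_def_of_ne_zero (mul_ne_zero hx' hw), cpow_def_of_ne_zero hx', cpow_def_of_ne_zero hw,
    log_ofReal_mul hx hw, ← Complex.exp_add, ofReal_log hx.le, add_mul]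

lemma isBigO_one_sub_inv_one_add_cpow (a : ℂ) :
    (fun u : ℂ => 1 - ((1 + u)⁻¹) ^ a) =O[𝓝 0] fun u => u := by
  have hdiff : DifferentiableAt ℂ (fun u : ℂ => 1 - ((1 + u)⁻¹) ^ a) 0 :=
    (((differentiableAt_id.const_add 1).inv (by simp)).cpow_const (by simp)).const_sub 1
  simpa using hdiff.isBigO_sub

lemma I_cpow_ofReal (a : ℝ) : I ^ (a : ℂ) = cexp ((Real.pi * a / 2 : ℝ) * I) := by
  rw [cpow_def_of_ne_zero I_ne_zero, log_I]
  congr 1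
  push_cast
  ring

lemma I_cpow_ofReal_im (a : ℝ) : (I ^ (a : ℂ)).im = Real.sin (Real.pi * a / 2) := by
  rw [I_cpow_ofReal, exp_ofReal_mul_I_im]

lemma I_cpow_cpow {a : ℝ} (ha : -2 < a) (ha' : a ≤ 2) (b : ℂ) :
    (I ^ (a : ℂ)) ^ b = I ^ (a * b) := by
  have him : (log I * a).im = Real.pi / 2 * a := by simp [log_I]
  refine (cpow_mul _ ?_ ?_).symm <;> rw [him] <;> nlinarith [Real.pi_pos]

lemma I_cpow_neg_add_ofReal_im (a t : ℝ) :
    (I ^ (-a : ℂ) + t).im = -Real.sin (Real.pi * a / 2) := by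
  rw [add_im, ofReal_im, add_zero, ← ofReal_neg, I_cpow_ofReal_im, mul_neg, neg_div, Real.sin_neg]

lemma sin_le_norm_I_cpow_neg_add_ofReal (a t : ℝ) :
    Real.sin (Real.pi * a / 2) ≤ ‖I ^ (-a : ℂ) + t‖ := by
  have him := (neg_le_abs _).trans (abs_im_le_norm (I ^ (-a : ℂ) + t))
  rwa [I_cpow_neg_add_ofReal_im, neg_neg] at him

lemma sin_pi_mul_div_two_pos {a : ℝ} (ha0 : 0 < a) (ha2 : a < 2) :
    0 < Real.sin (Real.pi * a / 2) := by
  apply Real.sin_pos_of_pos_of_lt_pi <;> nlinarith [Real.pi_pos]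

lemma I_cpow_neg_add_ofReal_mem_slitPlane {a : ℝ} (ha0 : 0 < a) (ha2 : a < 2) (t : ℝ) :
    I ^ (-a : ℂ) + t ∈ slitPlane := by
  refine mem_slitPlane_iff.2 (.inr ?_)
  rw [I_cpow_neg_add_ofReal_im]
  exact neg_ne_zero.2 (sin_pi_mul_div_two_pos ha0 ha2).ne'

end ComplexPowers

section ComplexDagum

open Complex Topology Bornology

/-- The continuation of `dagum lam δ` to complex arguments, with principal powers. For `δ < 2` it is
holomorphic in the right half plane, because `ζ ^ δ` avoids the negative axis there. -/
noncomputable def complexDagum (lam δ : ℝ) (ζ : ℂ) : ℂ :=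
  1 - (ζ ^ (δ : ℂ) / (1 + ζ ^ (δ : ℂ))) ^ (lam : ℂ)

variable {lam δ : ℝ}

lemma complexDagum_ofReal {r : ℝ} (hr : 0 ≤ r) : complexDagum lam δ r = (dagum lam δ r : ℝ) := by
  have hbase : 0 ≤ r ^ δ / (1 + r ^ δ) := by positivity
  rw [complexDagum, dagum, ofReal_sub, ofReal_cpow hbase]
  push_cast
  rw [ofReal_cpow hr]

lemma differentiableAt_complexDagum {ζ : ℂ} (hζ : ζ ∈ slitPlane) (hδ : ζ ^ (δ : ℂ) ∈ slitPlane) :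
    DifferentiableAt ℂ (complexDagum lam δ) ζ := by
  have hpow : DifferentiableAt ℂ (fun ζ : ℂ => ζ ^ (δ : ℂ)) ζ :=
    differentiableAt_id.cpow_const hζ
  have hquot : DifferentiableAt ℂ (fun ζ : ℂ => ζ ^ (δ : ℂ) / (1 + ζ ^ (δ : ℂ))) ζ :=
    hpow.div (hpow.const_add 1) (slitPlane_ne_zero (one_add_mem_slitPlane hδ))
  exact (hquot.cpow_const (div_one_add_mem_slitPlane hδ)).const_sub 1

lemma continuousAt_complexDagum_zero (hlam : 0 < lam) (hδ : 0 < δ) :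
    ContinuousAt (complexDagum lam δ) 0 := by
  have hδ0 : (δ : ℂ) ≠ 0 := ofReal_ne_zero.2 hδ.ne'
  have hpow : ContinuousAt (fun ζ : ℂ => ζ ^ (δ : ℂ)) 0 :=
    continuousAt_cpow_const_of_re_pos (by simp) (by simpa)
  have hquot : ContinuousAt (fun ζ : ℂ => ζ ^ (δ : ℂ) / (1 + ζ ^ (δ : ℂ))) 0 :=
    hpow.div (continuousAt_const.add hpow) (by simp [hδ0])
  have houter : ContinuousAt (fun w : ℂ => w ^ (lam : ℂ))
      ((0 : ℂ) ^ (δ : ℂ) / (1 + (0 : ℂ) ^ (δ : ℂ))) :=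
    continuousAt_cpow_const_of_re_pos (by simp [hδ0]) (by simpa)
  exact continuousAt_const.sub (houter.comp_of_eq hquot rfl)

lemma continuousAt_complexDagum (hlam : 0 < lam) (hδ0 : 0 < δ) (hδ2 : δ < 2) {ζ : ℂ}
    (hre : 0 ≤ ζ.re) : ContinuousAt (complexDagum lam δ) ζ := by
  rcases eq_or_ne ζ 0 with rfl | hζ
  · exact continuousAt_complexDagum_zero hlam hδ0
  · exact (differentiableAt_complexDagum (mem_slitPlane_of_re_nonneg hζ hre)
      (cpow_mem_slitPlane_of_re_nonneg hδ0 hδ2 hζ hre)).continuousAt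

lemma tendsto_mul_complexDagum_cobounded (hδ1 : 1 < δ) :
    Tendsto (fun ζ => ζ * complexDagum lam δ ζ) (cobounded ℂ) (𝓝 0) := by
  have hnorm : ∀ ζ : ℂ, ‖(ζ ^ (δ : ℂ))⁻¹‖ = ‖ζ‖ ^ (-δ) := fun ζ => by
    rw [norm_inv, norm_cpow_real, Real.rpow_neg (norm_nonneg ζ)]
  have hinv : Tendsto (fun ζ : ℂ => (ζ ^ (δ : ℂ))⁻¹) (cobounded ℂ) (𝓝 0) := by
    rw [tendsto_zero_iff_norm_tendsto_zero]
    simp only [hnorm]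
    exact (tendsto_rpow_neg_atTop (by linarith)).comp tendsto_norm_cobounded_atTop
  have hdagum : complexDagum lam δ =O[cobounded ℂ] fun ζ => (ζ ^ (δ : ℂ))⁻¹ := by
    refine ((isBigO_one_sub_inv_one_add_cpow lam).comp_tendsto hinv).congr' ?_ .rfl
    filter_upwards [eventually_ne_cobounded 0] with ζ hζ
    rw [Function.comp_apply, complexDagum, div_one_add_eq_inv_one_add_inv]
    simp [cpow_eq_zero_iff, hζ]
  refine ((Asymptotics.isBigO_refl _ _).mul hdagum).trans_tendsto ?_
  have hdecay : Tendsto (fun ζ : ℂ => ‖ζ‖ ^ (-(δ - 1))) (cobounded ℂ) (𝓝 0) :=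
    (tendsto_rpow_neg_atTop (by linarith)).comp tendsto_norm_cobounded_atTop
  refine tendsto_zero_iff_norm_tendsto_zero.2 (hdecay.congr' ?_)
  filter_upwards [eventually_ne_cobounded 0] with ζ hζ
  rw [norm_mul, hnorm, neg_sub, sub_eq_add_neg, Real.rpow_add (norm_pos_iff.2 hζ), Real.rpow_one]

/-- The bounded factor left in the real part of `y i * complexDagum lam δ (y i)` once the power
`y ^ (1 + δ * lam)` is split off. -/
noncomputable def dagumAxisProfile (lam δ y : ℝ) : ℝ :=
  (((I ^ (-δ : ℂ) + (y ^ δ : ℝ))⁻¹) ^ (lam : ℂ)).im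

lemma re_mul_I_mul_complexDagum {y : ℝ} (hδ0 : 0 < δ) (hδ2 : δ < 2) (hy : 0 < y) :
    (y * I * complexDagum lam δ (y * I)).re = y ^ (1 + δ * lam) * dagumAxisProfile lam δ y := by
  set k : ℂ := I ^ (-δ : ℂ) + (y ^ δ : ℝ) with hk
  have hk0 : k ≠ 0 := slitPlane_ne_zero (I_cpow_neg_add_ofReal_mem_slitPlane hδ0 hδ2 _)
  have hyδ : 0 < y ^ δ := Real.rpow_pos_of_pos hy δ
  have hpow : ((y : ℂ) * I) ^ (δ : ℂ) = (y ^ δ : ℝ) * (I ^ (-δ : ℂ))⁻¹ := by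
    rw [ofReal_pos_mul_cpow hy I_ne_zero, ofReal_cpow hy.le, cpow_neg, inv_inv]
  have hquot : ((y : ℂ) * I) ^ (δ : ℂ) / (1 + ((y : ℂ) * I) ^ (δ : ℂ)) = (y ^ δ : ℝ) * k⁻¹ := by
    have hI : I ^ (-δ : ℂ) ≠ 0 := by simp [cpow_eq_zero_iff]
    have hadd : 1 + (y ^ δ : ℝ) * (I ^ (-δ : ℂ))⁻¹ = k * (I ^ (-δ : ℂ))⁻¹ := by
      rw [hk]
      field_simp
    rw [hpow, hadd]
    field_simp
  have hpow_lam : ((y ^ δ : ℝ) * k⁻¹) ^ (lam : ℂ) = (y ^ (δ * lam) : ℝ) * k⁻¹ ^ (lam : ℂ) := by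
    rw [ofReal_pos_mul_cpow hyδ (inv_ne_zero hk0), ← ofReal_cpow hyδ.le, ← Real.rpow_mul hy.le]
  rw [complexDagum, hquot, hpow_lam, dagumAxisProfile, ← hk, Real.rpow_add hy, Real.rpow_one,
    mul_assoc, re_ofReal_mul, I_mul_re, sub_im, im_ofReal_mul, one_im]
  ring

lemma abs_dagumAxisProfile_le (hlam : 0 ≤ lam) (hδ0 : 0 < δ) (hδ2 : δ < 2) (y : ℝ) :
    |dagumAxisProfile lam δ y| ≤ (Real.sin (Real.pi * δ / 2))⁻¹ ^ lam := by
  refine (abs_im_le_norm _).trans ?_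
  rw [norm_cpow_real, norm_inv]
  have hsin := sin_pi_mul_div_two_pos hδ0 hδ2
  have hle := sin_le_norm_I_cpow_neg_add_ofReal δ (y ^ δ)
  gcongr

lemma continuous_dagumAxisProfile (hδ0 : 0 < δ) (hδ2 : δ < 2) :
    Continuous (dagumAxisProfile lam δ) := by
  have hbase : Continuous fun y : ℝ => I ^ (-δ : ℂ) + (y ^ δ : ℝ) :=
    continuous_const.add (continuous_ofReal.comp (Real.continuous_rpow_const hδ0.le))
  have hslit (y : ℝ) : I ^ (-δ : ℂ) + (y ^ δ : ℝ) ∈ slitPlane :=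
    I_cpow_neg_add_ofReal_mem_slitPlane hδ0 hδ2 _
  exact continuous_im.comp <| (hbase.inv₀ fun y => slitPlane_ne_zero (hslit y)).cpow
    continuous_const fun y => inv_mem_slitPlane (hslit y)

lemma dagumAxisProfile_zero (hδ0 : 0 < δ) (hδ2 : δ ≤ 2) :
    dagumAxisProfile lam δ 0 = Real.sin (Real.pi * (δ * lam) / 2) := by
  rw [dagumAxisProfile, Real.zero_rpow hδ0.ne', ofReal_zero, add_zero, cpow_neg, inv_inv,
    I_cpow_cpow (by linarith) hδ2, ← ofReal_mul, I_cpow_ofReal_im]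

/-- The Laplace integral into which the sine transform of `r * dagum lam δ r` turns when the contour
is rotated onto the imaginary axis. -/
noncomputable def dagumLaplace (lam δ z : ℝ) : ℝ :=
  ∫ y in Ioi (0 : ℝ), y ^ (1 + δ * lam) * Real.exp (-(z * y)) * dagumAxisProfile lam δ y

theorem tendsto_rpow_mul_dagumLaplace (hlam : 0 < lam) (hδ0 : 0 < δ) (hδ2 : δ < 2) :
    Tendsto (fun z => z ^ (2 + δ * lam) * dagumLaplace lam δ z) atTop
      (𝓝 (Real.Gamma (2 + δ * lam) * Real.sin (Real.pi * (δ * lam) / 2))) := by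
  have hcont := continuous_dagumAxisProfile (lam := lam) hδ0 hδ2
  simp only [dagumLaplace, show 1 + δ * lam = 2 + δ * lam - 1 by ring]
  refine tendsto_rpow_smul_laplace (by positivity) hcont.aestronglyMeasurable
    (fun y _ => abs_dagumAxisProfile_le hlam.le hδ0 hδ2 y) ?_
  rw [← dagumAxisProfile_zero hδ0 hδ2.le]
  exact (hcont.tendsto 0).mono_left nhdsWithin_le_nhds

lemma integral_mul_sin_mul_dagum_eq_im (hlam : 0 < lam) (hδ0 : 0 < δ) (hδ2 : δ < 2) (z : ℝ) {T : ℝ}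
    (hT : 0 ≤ T) :
    ∫ r in (0 : ℝ)..T, r * Real.sin (z * r) * dagum lam δ r =
      (∫ r in (0 : ℝ)..T, cexp (z * r * I) • (r * complexDagum lam δ r)).im := by
  have hint : IntervalIntegrable
      (fun r : ℝ => cexp (z * r * I) • (r * complexDagum lam δ r)) volume 0 T := by
    refine ContinuousOn.intervalIntegrable fun r hr => ?_
    rw [uIcc_of_le hT] at hr
    have hD : ContinuousAt (fun r : ℝ => complexDagum lam δ r) r :=
      (continuousAt_complexDagum hlam hδ0 hδ2 (by simpa using hr.1)).comp
        continuous_ofReal.continuousAt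
    have hexp : Continuous fun r : ℝ => cexp (z * r * I) := by fun_prop
    exact (hexp.continuousAt.smul (continuous_ofReal.continuousAt.mul hD)).continuousWithinAt
  rw [← imCLM_apply, ← imCLM.intervalIntegral_comp_comm hint]
  refine intervalIntegral.integral_congr fun r hr => ?_
  rw [uIcc_of_le hT] at hr
  rw [imCLM_apply, smul_eq_mul, complexDagum_ofReal hr.1, ← ofReal_mul, ← ofReal_mul,
    im_mul_ofReal, exp_ofReal_mul_I_im]
  ring

theorem tendsto_integral_mul_sin_mul_dagum (hlam : 0 < lam) (hδ1 : 1 < δ) (hδ2 : δ < 2) {z : ℝ}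
    (hz : 0 < z) :
    Tendsto (fun T : ℝ => ∫ r in (0 : ℝ)..T, r * Real.sin (z * r) * dagum lam δ r) atTop
      (𝓝 (dagumLaplace lam δ z)) := by
  have hδ0 : 0 < δ := by linarith
  have hcont : ContinuousOn (fun ζ => ζ * complexDagum lam δ ζ) (Ici 0 ×ℂ Ici 0) := fun ζ hζ =>
    (continuousAt_id.mul (continuousAt_complexDagum hlam hδ0 hδ2 hζ.1)).continuousWithinAt
  have hdiff : DifferentiableOn ℂ (fun ζ => ζ * complexDagum lam δ ζ) (Ioi 0 ×ℂ Ioi 0) := by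
    intro ζ hζ
    have hre : 0 < ζ.re := hζ.1
    have hζ0 : ζ ≠ 0 := fun h => by simp [h] at hre
    exact (differentiableAt_id.mul (differentiableAt_complexDagum (.inl hre)
      (cpow_mem_slitPlane_of_re_nonneg hδ0 hδ2 hζ0 hre.le))).differentiableWithinAt
  have hdecay : Tendsto (fun ζ => ζ * complexDagum lam δ ζ) (cobounded ℂ ⊓ 𝓟 (Ici 0 ×ℂ Ici 0))
      (𝓝 0) := (tendsto_mul_complexDagum_cobounded hδ1).mono_left inf_le_left
  have haxis : (I * ∫ y in Ioi (0 : ℝ), Real.exp (-(z * y)) •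
      (y * I * complexDagum lam δ (y * I))).im = dagumLaplace lam δ z := by
    rw [I_mul_im, ← reCLM_apply,
      ← reCLM.integral_comp_comm (integrableOn_exp_neg_smul_mul_I hz hcont hdecay), dagumLaplace]
    refine setIntegral_congr_fun measurableSet_Ioi fun y hy => ?_
    rw [reCLM_apply, smul_re, re_mul_I_mul_complexDagum hδ0 hδ2 hy, smul_eq_mul]
    ring
  rw [← haxis]
  refine ((continuous_im.tendsto _).comp
    (tendsto_integral_exp_mul_I_smul hz hcont hdiff hdecay)).congr' ?_
  filter_upwards [eventually_ge_atTop 0] with T hT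
  exact (integral_mul_sin_mul_dagum_eq_im hlam hδ0 hδ2 z hT).symm

end ComplexDagum

lemma Gamma_two_add_mul_sin_div {a : ℝ} (hpole : ∀ n : ℕ, a / 2 ≠ -n)
    (hpole' : ∀ n : ℕ, 1 - a / 2 ≠ -n) :
    1 / (2 * Real.pi ^ 2) * (Real.Gamma (2 + a) * Real.sin (Real.pi * a / 2)) =
      2 ^ (a - 1) * a * Real.Gamma ((3 + a) / 2) /
        (Real.pi ^ ((3 : ℝ) / 2) * Real.Gamma (1 - a / 2)) := by
  have hp := Real.pi_pos
  have ha : a / 2 ≠ 0 := by simpa using hpole 0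
  have hA := Real.Gamma_ne_zero hpole
  have hB := Real.Gamma_ne_zero hpole'
  have hreflection : Real.Gamma (a / 2) * Real.Gamma (1 - a / 2) *
      Real.sin (Real.pi * a / 2) = Real.pi := by
    have hprod := Real.Gamma_mul_Gamma_one_sub (a / 2)
    rw [← mul_div_assoc] at hprod
    have hsin : Real.sin (Real.pi * a / 2) ≠ 0 := fun h => by
      rw [h, div_zero] at hprod
      exact mul_ne_zero hA hB hprod
    rw [hprod, div_mul_cancel₀ _ hsin]
  have hduplication : a * Real.Gamma (a / 2) * Real.Gamma ((3 + a) / 2) * 2 ^ a =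
      Real.Gamma (2 + a) * √Real.pi := by
    have hdouble := Real.Gamma_mul_Gamma_add_half (1 + a / 2)
    rw [show 1 + a / 2 + 1 / 2 = (3 + a) / 2 by ring, show 2 * (1 + a / 2) = 2 + a by ring,
      show 1 - (2 + a) = -a - 1 by ring, add_comm 1, Real.Gamma_add_one ha,
      Real.rpow_sub_one two_ne_zero, Real.rpow_neg two_pos.le] at hdouble
    field_simp at hdouble
    exact hdouble
  have hpi : Real.pi ^ ((3 : ℝ) / 2) = Real.pi * √Real.pi := by
    rw [show (3 : ℝ) / 2 = 1 + 1 / 2 by norm_num, Real.rpow_add hp, Real.rpow_one,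
      Real.sqrt_eq_rpow]
  rw [hpi, Real.rpow_sub_one two_ne_zero, div_mul_eq_mul_div, one_mul,
    div_eq_div_iff (by positivity) (mul_ne_zero (by positivity) hB)]
  linear_combination (2 ^ a * a * Real.Gamma ((3 + a) / 2) * Real.pi) * hreflection -
    (Real.Gamma (1 - a / 2) * Real.sin (Real.pi * a / 2) * Real.pi) * hduplication

theorem dagum_high_frequency_dim_three_general (δ lam : ℝ) (hδ1 : 1 < δ) (hδ2 : δ < 2)
    (hlam : 0 < lam) (hpole : ∀ n : ℕ, 1 - lam * δ / 2 ≠ -n) :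
    ∃ Dh : ℝ → ℝ,
      (∀ z : ℝ, 0 < z →
        Tendsto (fun T : ℝ =>
            (1 / (2 * Real.pi ^ 2 * z)) * ∫ r in (0 : ℝ)..T, r * Real.sin (z * r) * dagum lam δ r)
          atTop (nhds (Dh z))) ∧
      Tendsto (fun z : ℝ => z ^ (3 + δ * lam) * Dh z) atTop
        (nhds (2 ^ (δ * lam - 1) * lam * δ * Real.Gamma ((3 + lam * δ) / 2) /
          (Real.pi ^ ((3 : ℝ) / 2) * Real.Gamma (1 - lam * δ / 2)))) := by
  have hδ0 : 0 < δ := by linarith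
  refine ⟨fun z => 1 / (2 * Real.pi ^ 2 * z) * dagumLaplace lam δ z, fun z hz =>
    (tendsto_integral_mul_sin_mul_dagum hlam hδ1 hδ2 hz).const_mul _, ?_⟩
  have hgamma := Gamma_two_add_mul_sin_div
    (fun n => ne_of_gt (by linarith [mul_pos hlam hδ0, n.cast_nonneg (α := ℝ)])) hpole
  have hlimit := (tendsto_rpow_mul_dagumLaplace hlam hδ0 hδ2).const_mul (1 / (2 * Real.pi ^ 2))
  rw [mul_comm δ lam, hgamma, ← mul_assoc] at hlimit
  rw [mul_comm δ lam]
  refine hlimit.congr' ?_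
  filter_upwards [eventually_gt_atTop 0] with z hz
  rw [show 3 + lam * δ = 2 + lam * δ + 1 by ring, Real.rpow_add_one hz.ne']
  field_simp

/-- High-frequency behaviour in dimension `d = 3` for `δ ∈ (1,2)`, `δλ ∈ (0,2)`:
the improper integral
`\widehat D_3(z) = (1/(2π²z)) lim_{T→∞} ∫₀^T r sin(zr) D_{λ,δ}(r) dr` exists for every
`z > 0`, and `z^{3+δλ} \widehat D_3(z) → 2^{δλ-1} λ δ Γ((3+λδ)/2)/(π^{3/2} Γ(1-λδ/2))`
as `z → ∞`. -/
theorem dagum_high_frequency_dim_three (δ lam : ℝ) (hδ1 : 1 < δ) (hδ2 : δ < 2)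
    (hlam : 0 < lam) (hdl0 : 0 < δ * lam) (hdl2 : δ * lam < 2) :
    ∃ Dh : ℝ → ℝ,
      (∀ z : ℝ, 0 < z →
        Tendsto (fun T : ℝ =>
            (1 / (2 * Real.pi ^ 2 * z)) * ∫ r in (0 : ℝ)..T, r * Real.sin (z * r) * dagum lam δ r)
          atTop (nhds (Dh z))) ∧
      Tendsto (fun z : ℝ => z ^ (3 + δ * lam) * Dh z) atTop
        (nhds (2 ^ (δ * lam - 1) * lam * δ * Real.Gamma ((3 + lam * δ) / 2) /
          (Real.pi ^ ((3 : ℝ) / 2) * Real.Gamma (1 - lam * δ / 2)))) :=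
  dagum_high_frequency_dim_three_general δ lam hδ1 hδ2 hlam fun n =>
    ne_of_gt (by linarith [mul_comm δ lam, n.cast_nonneg (α := ℝ)])
end

section
/- Let d ≥ 1 be an integer, λ > 0, and δ > d. Then x ↦ D_{λ,δ}(‖x‖) is integrable on ℝ^d and ∫_{ℝ^d} D_{λ,δ}(‖x‖) dx = π^{d/2} Γ(1 − d/δ) Γ(d/δ + λ) / ( Γ(1 + d/2) Γ(λ) ). -/
open MeasureTheory

/-!
Put `q(r) = r^δ / (1 + r^δ)`, so that `D_{λ,δ}(r) = 1 - q(r)^λ = ∫_{q(r)}^1 λ u^(λ-1) du`. By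
Tonelli, the integral of `D_{λ,δ}(‖x‖)` is that of `λ u^(λ-1) μ{x | q(‖x‖) < u}` over `0 < u < 1`.
The set is the ball of radius `(u/(1-u))^(1/δ)`, of measure `(u/(1-u))^(d/δ) μ(B)` with `B` the unit
ball. What is left is the Beta integral `λ B(d/δ + λ, 1 - d/δ)`, which converges since `d < δ`.
-/

open Set Module ProbabilityTheory

theorem lintegral_setLIntegral_Ioi {α : Type*} [MeasurableSpace α] (μ : Measure α) [SFinite μ]
    (ν : Measure ℝ) [SFinite ν] {q : α → ℝ} (hq : Measurable q) {g : ℝ → ENNReal}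
    (hg : Measurable g) :
    ∫⁻ x, ∫⁻ u in Ioi (q x), g u ∂ν ∂μ = ∫⁻ u, g u * μ {x | q x < u} ∂ν := by
  have hmeas : Measurable (Function.uncurry fun x u => (Ioi (q x)).indicator g u) :=
    (hg.comp measurable_snd).indicator
      (measurableSet_lt (hq.comp measurable_fst) measurable_snd)
  calc ∫⁻ x, ∫⁻ u in Ioi (q x), g u ∂ν ∂μ
      = ∫⁻ x, ∫⁻ u, (Ioi (q x)).indicator g u ∂ν ∂μ := by
        simp only [lintegral_indicator measurableSet_Ioi]
    _ = ∫⁻ u, ∫⁻ x, {x | q x < u}.indicator (fun _ => g u) x ∂μ ∂ν :=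
        lintegral_lintegral_swap hmeas.aemeasurable
    _ = ∫⁻ u, g u * μ {x | q x < u} ∂ν := by
        simp only [lintegral_indicator_const (measurableSet_lt hq measurable_const)]

theorem setLIntegral_Ioo_mul_rpow_sub_one {s a b : ℝ} (hs : 0 < s) (ha : 0 ≤ a) (hab : a ≤ b) :
    ∫⁻ u in Ioo a b, ENNReal.ofReal (s * u ^ (s - 1)) = ENNReal.ofReal (b ^ s - a ^ s) := by
  have hint : IntegrableOn (fun u : ℝ => s * u ^ (s - 1)) (Ioo a b) :=
    ((intervalIntegrable_iff_integrableOn_Ioo_of_le hab).1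
      (intervalIntegral.intervalIntegrable_rpow' (by linarith))).const_mul s
  have hnonneg : 0 ≤ᵐ[volume.restrict (Ioo a b)] fun u : ℝ => s * u ^ (s - 1) :=
    (ae_restrict_mem measurableSet_Ioo).mono fun u hu =>
      mul_nonneg hs.le (Real.rpow_nonneg (ha.trans hu.1.le) _)
  rw [← ofReal_integral_eq_lintegral_ofReal hint hnonneg, ← integral_Ioc_eq_integral_Ioo,
    ← intervalIntegral.integral_of_le hab, intervalIntegral.integral_const_mul,
    integral_rpow (Or.inl (by linarith)), sub_add_cancel, mul_div_cancel₀ _ hs.ne']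

theorem lintegral_ofReal_one_sub_rpow {α : Type*} [MeasurableSpace α] (μ : Measure α) [SFinite μ]
    {q : α → ℝ} (hq : Measurable q) (hq_mem : ∀ x, q x ∈ Icc 0 1) {s : ℝ} (hs : 0 < s) :
    ∫⁻ x, ENNReal.ofReal (1 - q x ^ s) ∂μ =
      ∫⁻ u in Ioo 0 1, ENNReal.ofReal (s * u ^ (s - 1)) * μ {x | q x < u} := by
  rw [← lintegral_setLIntegral_Ioi μ (volume.restrict (Ioo 0 1)) hq (by fun_prop)]
  refine lintegral_congr fun x => ?_
  have hinter : Ioi (q x) ∩ Ioo 0 1 = Ioo (q x) 1 := by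
    rw [inter_comm, Ioo_inter_Ioi, max_eq_right (hq_mem x).1]
  rw [Measure.restrict_restrict measurableSet_Ioi, hinter,
    setLIntegral_Ioo_mul_rpow_sub_one hs (hq_mem x).1 (hq_mem x).2, Real.one_rpow]

theorem setLIntegral_Ioo_rpow_mul_one_sub_rpow {a b : ℝ} (ha : 0 < a) (hb : 0 < b) :
    ∫⁻ u in Ioo (0 : ℝ) 1, ENNReal.ofReal (u ^ (a - 1) * (1 - u) ^ (b - 1)) =
      ENNReal.ofReal (beta a b) := by
  have hbeta : 0 < beta a b := beta_pos ha hb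
  calc ∫⁻ u in Ioo (0 : ℝ) 1, ENNReal.ofReal (u ^ (a - 1) * (1 - u) ^ (b - 1))
      = ∫⁻ u in Ioo (0 : ℝ) 1, ENNReal.ofReal (beta a b) *
          ENNReal.ofReal (1 / beta a b * u ^ (a - 1) * (1 - u) ^ (b - 1)) := by
        refine lintegral_congr fun u => ?_
        rw [← ENNReal.ofReal_mul hbeta.le]
        congr 1
        field_simp
    _ = ENNReal.ofReal (beta a b) * ∫⁻ u, betaPDF a b u := by
        rw [lintegral_const_mul' _ _ ENNReal.ofReal_ne_top, lintegral_betaPDF]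
    _ = ENNReal.ofReal (beta a b) := by rw [lintegral_betaPDF_eq_one ha hb, mul_one]

theorem mul_beta_add_one_sub {s : ℝ} (hs : s ≠ 0) (a : ℝ) :
    s * beta (a + s) (1 - a) = Real.Gamma (1 - a) * Real.Gamma (a + s) / Real.Gamma s := by
  rw [beta, show a + s + (1 - a) = s + 1 by ring, Real.Gamma_add_one hs, mul_div_assoc',
    mul_div_mul_left _ _ hs, mul_comm (Real.Gamma (1 - a))]

theorem rpow_sub_one_mul_div_one_sub_rpow {u : ℝ} (hu : u ∈ Ioo 0 1) (s a : ℝ) :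
    u ^ (s - 1) * (u / (1 - u)) ^ a = u ^ (a + s - 1) * (1 - u) ^ (1 - a - 1) := by
  have hu' : 0 < 1 - u := sub_pos.2 hu.2
  rw [Real.div_rpow hu.1.le hu'.le, add_sub_assoc, Real.rpow_add hu.1,
    show 1 - a - 1 = -a by ring, Real.rpow_neg hu'.le]
  ring

section Dagum

variable {lam δ r : ℝ}

theorem rpow_div_one_add_rpow_mem_Icc (hr : 0 ≤ r) : r ^ δ / (1 + r ^ δ) ∈ Icc 0 1 :=
  ⟨by positivity, div_le_one_of_le₀ (le_add_of_nonneg_left zero_le_one) (by positivity)⟩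

theorem rpow_div_one_add_rpow_lt_iff (hδ : 0 < δ) (hr : 0 ≤ r) {u : ℝ} (hu : u ∈ Ioo 0 1) :
    r ^ δ / (1 + r ^ δ) < u ↔ r < (u / (1 - u)) ^ δ⁻¹ := by
  have hu' : 0 < 1 - u := sub_pos.2 hu.2
  rw [Real.lt_rpow_inv_iff_of_pos hr (div_pos hu.1 hu').le hδ, div_lt_iff₀ (by positivity),
    lt_div_iff₀ hu']
  constructor <;> intro h <;> linarith

theorem dagum_nonneg (hlam : 0 ≤ lam) (hr : 0 ≤ r) : 0 ≤ dagum lam δ r :=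
  have hq := rpow_div_one_add_rpow_mem_Icc (δ := δ) hr
  sub_nonneg.2 (Real.rpow_le_one hq.1 hq.2 hlam)

theorem measurable_dagum : Measurable (dagum lam δ) := by
  unfold dagum
  fun_prop

section MeasureSublevel

variable {α : Type*} [MeasurableSpace α] {μ : Measure α} [SFinite μ] {f : α → ℝ} {c p : ℝ}

theorem lintegral_dagum_of_measure_lt (hf : Measurable f) (hf_nonneg : ∀ x, 0 ≤ f x)
    (hμ : ∀ t > 0, μ {x | f x < t} = ENNReal.ofReal (c * t ^ p)) (hc : 0 ≤ c) (hp : 0 ≤ p)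
    (hlam : 0 < lam) (hδ : p < δ) :
    ∫⁻ x, ENNReal.ofReal (dagum lam δ (f x)) ∂μ =
      ENNReal.ofReal
        (c * (Real.Gamma (1 - p / δ) * Real.Gamma (p / δ + lam) / Real.Gamma lam)) := by
  have hδ_pos : 0 < δ := hp.trans_lt hδ
  have hpδ : 0 < 1 - p / δ := sub_pos.2 ((div_lt_one hδ_pos).2 hδ)
  have hsublevel : ∀ u ∈ Ioo (0 : ℝ) 1, μ {x | f x ^ δ / (1 + f x ^ δ) < u} =
      ENNReal.ofReal (c * (u / (1 - u)) ^ (p / δ)) := fun u hu => by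
    have hodds : 0 < u / (1 - u) := div_pos hu.1 (sub_pos.2 hu.2)
    simp only [rpow_div_one_add_rpow_lt_iff hδ_pos (hf_nonneg _) hu]
    rw [hμ _ (Real.rpow_pos_of_pos hodds _), ← Real.rpow_mul hodds.le, inv_mul_eq_div]
  calc ∫⁻ x, ENNReal.ofReal (dagum lam δ (f x)) ∂μ
      = ∫⁻ u in Ioo 0 1, ENNReal.ofReal (lam * u ^ (lam - 1)) *
          μ {x | f x ^ δ / (1 + f x ^ δ) < u} :=
        lintegral_ofReal_one_sub_rpow μ (by fun_prop)
          (fun x => rpow_div_one_add_rpow_mem_Icc (hf_nonneg x)) hlam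
    _ = ∫⁻ u in Ioo (0 : ℝ) 1, ENNReal.ofReal (c * lam) *
          ENNReal.ofReal (u ^ (p / δ + lam - 1) * (1 - u) ^ (1 - p / δ - 1)) := by
        refine setLIntegral_congr_fun measurableSet_Ioo fun u hu => ?_
        have hu_pos : 0 < u := hu.1
        simp only [hsublevel u hu]
        rw [← ENNReal.ofReal_mul (by positivity), ← ENNReal.ofReal_mul (by positivity),
          ← rpow_sub_one_mul_div_one_sub_rpow hu]
        congr 1
        ring
    _ = ENNReal.ofReal (c * (lam * beta (p / δ + lam) (1 - p / δ))) := by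
        rw [lintegral_const_mul' _ _ ENNReal.ofReal_ne_top,
          setLIntegral_Ioo_rpow_mul_one_sub_rpow (by positivity) hpδ,
          ← ENNReal.ofReal_mul (by positivity), mul_assoc]
    _ = _ := by rw [mul_beta_add_one_sub hlam.ne']

theorem integrable_dagum_of_measure_lt (hf : Measurable f) (hf_nonneg : ∀ x, 0 ≤ f x)
    (hμ : ∀ t > 0, μ {x | f x < t} = ENNReal.ofReal (c * t ^ p)) (hc : 0 ≤ c) (hp : 0 ≤ p)
    (hlam : 0 < lam) (hδ : p < δ) : Integrable (fun x => dagum lam δ (f x)) μ :=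
  (lintegral_ofReal_ne_top_iff_integrable
    (measurable_dagum.comp hf).aestronglyMeasurable
    (ae_of_all μ fun x => dagum_nonneg hlam.le (hf_nonneg x))).1
    ((lintegral_dagum_of_measure_lt hf hf_nonneg hμ hc hp hlam hδ).trans_ne
      ENNReal.ofReal_ne_top)

theorem integral_dagum_of_measure_lt (hf : Measurable f) (hf_nonneg : ∀ x, 0 ≤ f x)
    (hμ : ∀ t > 0, μ {x | f x < t} = ENNReal.ofReal (c * t ^ p)) (hc : 0 ≤ c) (hp : 0 ≤ p)
    (hlam : 0 < lam) (hδ : p < δ) :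
    ∫ x, dagum lam δ (f x) ∂μ =
      c * (Real.Gamma (1 - p / δ) * Real.Gamma (p / δ + lam) / Real.Gamma lam) := by
  have hδ_pos : 0 < δ := hp.trans_lt hδ
  have hpδ : 0 < Real.Gamma (1 - p / δ) :=
    Real.Gamma_pos_of_pos (sub_pos.2 ((div_lt_one hδ_pos).2 hδ))
  rw [integral_eq_lintegral_of_nonneg_ae
      (ae_of_all μ fun x => dagum_nonneg hlam.le (hf_nonneg x))
      (measurable_dagum.comp hf).aestronglyMeasurable,
    lintegral_dagum_of_measure_lt hf hf_nonneg hμ hc hp hlam hδ,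
    ENNReal.toReal_ofReal (by positivity)]

end MeasureSublevel

end Dagum

theorem measure_norm_lt_eq_mul_rpow {E : Type*} [NormedAddCommGroup E] [NormedSpace ℝ E]
    [FiniteDimensional ℝ E] [MeasurableSpace E] [BorelSpace E] (μ : Measure E)
    [μ.IsAddHaarMeasure] {t : ℝ} (ht : 0 < t) :
    μ {x | ‖x‖ < t} = ENNReal.ofReal (μ.real (Metric.ball 0 1) * t ^ (finrank ℝ E : ℝ)) := by
  rw [← ball_zero_eq, Measure.addHaar_ball_of_pos μ 0 ht, mul_comm, Real.rpow_natCast,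
    ENNReal.ofReal_mul measureReal_nonneg, ofReal_measureReal]

theorem volume_real_ball_zero_one (ι : Type*) [Fintype ι] [Nonempty ι] :
    volume.real (Metric.ball (0 : EuclideanSpace ℝ ι) 1) =
      Real.pi ^ ((Fintype.card ι : ℝ) / 2) / Real.Gamma (1 + Fintype.card ι / 2) := by
  rw [measureReal_def, EuclideanSpace.volume_ball, ENNReal.ofReal_one, one_pow, one_mul,
    ENNReal.toReal_ofReal (by positivity), Real.rpow_div_two_eq_sqrt _ Real.pi_pos.le,
    Real.rpow_natCast, add_comm]

theorem dagum_integral_eval_general {E : Type*} [NormedAddCommGroup E] [NormedSpace ℝ E]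
    [FiniteDimensional ℝ E] [MeasurableSpace E] [BorelSpace E] (μ : Measure E)
    [μ.IsAddHaarMeasure] {lam δ : ℝ} (hlam : 0 < lam) (hδ : (finrank ℝ E : ℝ) < δ) :
    Integrable (fun x => dagum lam δ ‖x‖) μ ∧
      ∫ x, dagum lam δ ‖x‖ ∂μ =
        μ.real (Metric.ball 0 1) * (Real.Gamma (1 - finrank ℝ E / δ) *
          Real.Gamma (finrank ℝ E / δ + lam) / Real.Gamma lam) :=
  have hball (t : ℝ) (ht : 0 < t) := measure_norm_lt_eq_mul_rpow μ ht
  ⟨integrable_dagum_of_measure_lt measurable_norm norm_nonneg hball measureReal_nonneg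
      (Nat.cast_nonneg _) hlam hδ,
    integral_dagum_of_measure_lt measurable_norm norm_nonneg hball measureReal_nonneg
      (Nat.cast_nonneg _) hlam hδ⟩

/-- For `δ > d`, the radial Dagum function is integrable on `ℝ^d` and
`∫_{ℝ^d} D_{λ,δ}(‖x‖) dx = π^{d/2} Γ(1 - d/δ) Γ(d/δ + λ) / (Γ(1 + d/2) Γ(λ))`. -/
theorem dagum_integral_eval (d : ℕ) (hd : 1 ≤ d) (lam δ : ℝ) (hlam : 0 < lam)
    (hδ : (d : ℝ) < δ) :
    Integrable (fun x : EuclideanSpace ℝ (Fin d) => dagum lam δ ‖x‖) ∧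
    ∫ x : EuclideanSpace ℝ (Fin d), dagum lam δ ‖x‖
      = Real.pi ^ ((d : ℝ) / 2) * Real.Gamma (1 - d / δ) * Real.Gamma (d / δ + lam) /
        (Real.Gamma (1 + d / 2) * Real.Gamma lam) := by
  have : Nonempty (Fin d) := Fin.pos_iff_nonempty.1 hd
  simpa [volume_real_ball_zero_one, div_mul_div_comm, mul_assoc] using
    dagum_integral_eval_general (volume : Measure (EuclideanSpace ℝ (Fin d))) hlam (by simpa)
end

section
/- Let s ∈ (0,1) and λ > 0. Then the integral ∫₀^∞ u^{s−1} ( 1 − (u/(1+u))^{λ} ) du converges and equals Γ(1−s) Γ(s+λ) / ( s Γ(λ) ). -/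
open MeasureTheory Set

open Asymptotics Filter ProbabilityTheory Topology

/-!
Integrate by parts against `u ^ s / s`: near `∞` the function `1 - (u / (1 + u)) ^ λ` is
`O(u⁻¹)`, and near `0` it is `O(1 + u ^ λ)`, so the boundary terms vanish. What remains is
`λ / s` times `∫ u ^ (s + λ - 1) (1 + u) ^ (-(λ + 1))`, which the substitution `t = u / (1 + u)`
turns into the Beta integral `B(s + λ, 1 - s)`.
-/

section BetaPrime

variable {a b : ℝ}

lemma lintegral_Ioo_rpow_mul_one_sub_rpow (ha : 0 < a) (hb : 0 < b) :
    ∫⁻ t in Ioo (0 : ℝ) 1, ENNReal.ofReal (t ^ (a - 1) * (1 - t) ^ (b - 1)) =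
      ENNReal.ofReal (beta a b) := by
  have hβ : 0 < beta a b := beta_pos ha hb
  have density : ∫⁻ t in Ioo (0 : ℝ) 1,
      ENNReal.ofReal (1 / beta a b * t ^ (a - 1) * (1 - t) ^ (b - 1)) = 1 := by
    rw [← lintegral_betaPDF, lintegral_betaPDF_eq_one ha hb]
  rw [← mul_one (ENNReal.ofReal (beta a b)), ← density,
    ← lintegral_const_mul' _ _ ENNReal.ofReal_ne_top]
  refine lintegral_congr fun t ↦ ?_
  rw [← ENNReal.ofReal_mul hβ.le]
  congr 1
  field_simp

lemma one_sub_div_one_add {u : ℝ} (hu : 1 + u ≠ 0) : 1 - u / (1 + u) = (1 + u)⁻¹ := by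
  field_simp
  ring

lemma hasDerivAt_div_one_add {u : ℝ} (hu : 1 + u ≠ 0) :
    HasDerivAt (fun u : ℝ ↦ u / (1 + u)) ((1 + u) ^ 2)⁻¹ u := by
  have h := (hasDerivAt_id u).div ((hasDerivAt_id u).const_add 1) hu
  exact h.congr_deriv (by simp)

lemma monotoneOn_div_one_add : MonotoneOn (fun u : ℝ ↦ u / (1 + u)) (Ioi 0) := by
  intro u (hu : 0 < u) v (hv : 0 < v) huv
  dsimp only
  rw [div_le_div_iff₀ (by positivity) (by positivity)]
  linarith

lemma image_div_one_add_Ioi : (fun u : ℝ ↦ u / (1 + u)) '' Ioi 0 = Ioo 0 1 := by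
  ext t
  constructor
  · rintro ⟨u, hu : 0 < u, rfl⟩
    exact ⟨by positivity, (div_lt_one (by positivity)).2 (by linarith)⟩
  · rintro ⟨ht0, ht1⟩
    have : 0 < 1 - t := sub_pos.2 ht1
    refine ⟨t / (1 - t), div_pos ht0 this, ?_⟩
    field_simp
    ring

lemma lintegral_Ioi_rpow_mul_one_add_rpow (ha : 0 < a) (hb : 0 < b) :
    ∫⁻ u in Ioi (0 : ℝ), ENNReal.ofReal (u ^ (a - 1) * (1 + u) ^ (-(a + b))) =
      ENNReal.ofReal (beta a b) := by
  rw [← lintegral_Ioo_rpow_mul_one_sub_rpow ha hb, ← image_div_one_add_Ioi,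
    lintegral_image_eq_lintegral_deriv_mul_of_monotoneOn measurableSet_Ioi
      (fun u hu ↦ (hasDerivAt_div_one_add (add_pos one_pos hu).ne').hasDerivWithinAt)
      monotoneOn_div_one_add]
  refine setLIntegral_congr_fun measurableSet_Ioi fun u (hu : 0 < u) ↦ ?_
  have hu' : 0 < 1 + u := by positivity
  have split_exponent : -(a + b) = -2 - (a - 1) - (b - 1) := by ring
  rw [← ENNReal.ofReal_mul (by positivity), one_sub_div_one_add hu'.ne',
    Real.div_rpow hu.le hu'.le, Real.inv_rpow hu'.le, split_exponent,
    Real.rpow_sub hu', Real.rpow_sub hu', Real.rpow_neg hu'.le, Real.rpow_two]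
  congr 1
  field_simp

lemma integrableOn_Ioi_rpow_mul_one_add_rpow (ha : 0 < a) (hb : 0 < b) :
    IntegrableOn (fun u : ℝ ↦ u ^ (a - 1) * (1 + u) ^ (-(a + b))) (Ioi 0) := by
  refine (lintegral_ofReal_ne_top_iff_integrable (by fun_prop) ?_).1 ?_
  · exact ae_restrict_of_forall_mem measurableSet_Ioi fun u (hu : 0 < u) ↦ by positivity
  · rw [lintegral_Ioi_rpow_mul_one_add_rpow ha hb]
    exact ENNReal.ofReal_ne_top

lemma integral_Ioi_rpow_mul_one_add_rpow (ha : 0 < a) (hb : 0 < b) :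
    ∫ u in Ioi (0 : ℝ), u ^ (a - 1) * (1 + u) ^ (-(a + b)) = beta a b := by
  rw [integral_eq_lintegral_of_nonneg_ae _ (by fun_prop),
    lintegral_Ioi_rpow_mul_one_add_rpow ha hb, ENNReal.toReal_ofReal (beta_pos ha hb).le]
  exact ae_restrict_of_forall_mem measurableSet_Ioi fun u (hu : 0 < u) ↦ by positivity

end BetaPrime

section MellinByParts

variable {f f' : ℝ → ℝ} {a b s : ℝ}

lemma tendsto_rpow_mul_zero_of_isBigO {l : Filter ℝ} (hl : ∀ᶠ u in l, 0 < u)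
    (hf : f =O[l] (· ^ (-a))) (hlim : Tendsto (fun u : ℝ ↦ u ^ (s - a)) l (𝓝 0)) :
    Tendsto (fun u ↦ u ^ s * f u) l (𝓝 0) := by
  refine ((isBigO_refl (fun u : ℝ ↦ u ^ s) l).mul hf).trans_tendsto (hlim.congr' ?_)
  filter_upwards [hl] with u hu
  rw [sub_eq_add_neg, Real.rpow_add hu]

lemma tendsto_rpow_nhdsGT_zero {p : ℝ} (hp : 0 < p) :
    Tendsto (fun u : ℝ ↦ u ^ p) (𝓝[>] 0) (𝓝 0) := by
  have h := (Real.continuousAt_rpow_const 0 p (Or.inr hp.le)).tendsto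
  rw [Real.zero_rpow hp.ne'] at h
  exact h.mono_left nhdsWithin_le_nhds

lemma mul_integral_rpow_sub_one_mul_eq_neg_integral_rpow_mul_deriv
    (hf : ∀ u ∈ Ioi 0, HasDerivAt f (f' u) u)
    (htop : f =O[atTop] (· ^ (-a))) (hsa : s < a)
    (hzero : f =O[𝓝[>] 0] (· ^ (-b))) (hbs : b < s)
    (hf' : IntegrableOn (fun u ↦ u ^ s * f' u) (Ioi 0)) :
    s * ∫ u in Ioi 0, u ^ (s - 1) * f u = -∫ u in Ioi 0, u ^ s * f' u := by
  have hpow : ∀ u ∈ Ioi (0 : ℝ), HasDerivAt (fun u ↦ u ^ s) (s * u ^ (s - 1)) u :=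
    fun u hu ↦ Real.hasDerivAt_rpow_const (Or.inl (ne_of_gt hu))
  have lim_zero : Tendsto (fun u ↦ u ^ s * f u) (𝓝[>] 0) (𝓝 0) :=
    tendsto_rpow_mul_zero_of_isBigO self_mem_nhdsWithin hzero
      (tendsto_rpow_nhdsGT_zero (sub_pos.2 hbs))
  have lim_top : Tendsto (fun u ↦ u ^ s * f u) atTop (𝓝 0) :=
    tendsto_rpow_mul_zero_of_isBigO (eventually_gt_atTop 0) htop
      (by simpa only [neg_sub] using tendsto_rpow_neg_atTop (sub_pos.2 hsa))
  have integrable_mul : IntegrableOn (fun u ↦ u ^ (s - 1) * f u) (Ioi 0) :=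
    mellin_convergent_of_isBigO_scalar
      ((HasDerivAt.continuousOn hf).locallyIntegrableOn measurableSet_Ioi) htop hsa hzero hbs
  have integrable_deriv_mul : IntegrableOn (fun u ↦ s * u ^ (s - 1) * f u) (Ioi 0) := by
    simpa only [IntegrableOn, mul_assoc] using integrable_mul.const_mul s
  have parts :=
    integral_Ioi_mul_deriv_eq_deriv_mul hpow hf hf' integrable_deriv_mul lim_zero lim_top
  simp only [mul_assoc, integral_const_mul] at parts
  linarith

end MellinByParts

section Kernel

lemma hasDerivAt_one_sub_div_one_add_rpow (p : ℝ) {u : ℝ} (hu : 0 < u) :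
    HasDerivAt (fun u : ℝ ↦ 1 - (u / (1 + u)) ^ p)
      (-p * (u ^ (p - 1) * (1 + u) ^ (-(p + 1)))) u := by
  have hu' : 0 < 1 + u := by positivity
  have h := ((hasDerivAt_div_one_add hu'.ne').rpow_const (p := p)
    (Or.inl (div_pos hu hu').ne')).const_sub 1
  refine h.congr_deriv ?_
  have split_exponent : -(p + 1) = -2 - (p - 1) := by ring
  rw [Real.div_rpow hu.le hu'.le, split_exponent, Real.rpow_sub hu' (-2),
    Real.rpow_neg hu'.le, Real.rpow_two]
  field_simp

lemma isBigO_one_sub_div_one_add_rpow_atTop (p : ℝ) :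
    (fun u : ℝ ↦ 1 - (u / (1 + u)) ^ p) =O[atTop] (· ^ (-1 : ℝ)) := by
  have gap : (fun u : ℝ ↦ u / (1 + u) - 1) =O[atTop] (· ^ (-1 : ℝ)) := by
    refine IsBigO.of_bound' ?_
    filter_upwards [eventually_gt_atTop 0] with u hu
    rw [norm_sub_rev, one_sub_div_one_add (add_pos one_pos hu).ne', Real.rpow_neg_one,
      norm_inv, norm_inv, Real.norm_of_nonneg hu.le, Real.norm_of_nonneg (by positivity)]
    gcongr
    linarith
  have lim_one : Tendsto (fun u : ℝ ↦ u / (1 + u)) atTop (𝓝 1) := by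
    rw [← tendsto_sub_nhds_zero_iff]
    exact gap.trans_tendsto (tendsto_rpow_neg_atTop one_pos)
  have taylor := (Real.hasDerivAt_rpow_const (x := 1) (p := p) (Or.inl one_ne_zero)).isBigO_sub
  simpa only [Real.one_rpow, Function.comp_def, neg_sub] using
    ((taylor.comp_tendsto lim_one).trans gap).neg_left

lemma isBigO_rpow_rpow_nhdsGT_zero {p q : ℝ} (hpq : q ≤ p) :
    (fun u : ℝ ↦ u ^ p) =O[𝓝[>] 0] (· ^ q) := by
  refine IsBigO.of_bound' ?_
  filter_upwards [Ioo_mem_nhdsGT one_pos] with u hu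
  have := hu.1
  rw [Real.norm_of_nonneg (by positivity), Real.norm_of_nonneg (by positivity)]
  exact Real.rpow_le_rpow_of_exponent_ge hu.1 hu.2.le hpq

lemma isBigO_one_sub_div_one_add_rpow_nhdsGT_zero {b p : ℝ} (hb : 0 ≤ b) (hbp : -p ≤ b) :
    (fun u : ℝ ↦ 1 - (u / (1 + u)) ^ p) =O[𝓝[>] 0] (· ^ (-b)) := by
  have one_le : (fun _ : ℝ ↦ (1 : ℝ)) =O[𝓝[>] 0] (· ^ (-b)) := by
    simpa only [Real.rpow_zero] using isBigO_rpow_rpow_nhdsGT_zero (neg_nonpos.2 hb)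
  have denominator : (fun u : ℝ ↦ ((1 + u) ^ p)⁻¹) =O[𝓝[>] 0] (fun _ ↦ (1 : ℝ)) := by
    have : ContinuousAt (fun u : ℝ ↦ ((1 + u) ^ p)⁻¹) 0 := by
      fun_prop (disch := simp)
    exact (this.tendsto.mono_left nhdsWithin_le_nhds).isBigO_one ℝ
  have power : (fun u : ℝ ↦ (u / (1 + u)) ^ p) =O[𝓝[>] 0] (· ^ (-b)) := by
    refine ((isBigO_rpow_rpow_nhdsGT_zero (neg_le.1 hbp)).mul denominator).congr' ?_ ?_
    · filter_upwards [self_mem_nhdsWithin] with u (hu : 0 < u)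
      rw [Real.div_rpow hu.le (by positivity), div_eq_mul_inv]
    · simp only [mul_one, EventuallyEq.rfl]
  exact one_le.sub power

end Kernel

theorem integral_dagum_mellin_general (s lam : ℝ) (hs0 : 0 < s) (hs1 : s < 1)
    (hslam : 0 < s + lam) (hlam : lam ≠ 0) :
    IntegrableOn (fun u : ℝ => u ^ (s - 1) * (1 - (u / (1 + u)) ^ lam)) (Ioi 0) ∧
    ∫ u in Ioi (0 : ℝ), u ^ (s - 1) * (1 - (u / (1 + u)) ^ lam)
      = Real.Gamma (1 - s) * Real.Gamma (s + lam) / (s * Real.Gamma lam) := by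
  have hs1' : 0 < 1 - s := sub_pos.2 hs1
  have hderiv := fun u (hu : u ∈ Ioi (0 : ℝ)) ↦ hasDerivAt_one_sub_div_one_add_rpow lam hu
  have htop := isBigO_one_sub_div_one_add_rpow_atTop lam
  have hzero := isBigO_one_sub_div_one_add_rpow_nhdsGT_zero
    (le_max_left 0 (-lam)) (le_max_right 0 (-lam))
  have hmax : max 0 (-lam) < s := max_lt hs0 (by linarith)
  refine ⟨mellin_convergent_of_isBigO_scalar
    ((HasDerivAt.continuousOn hderiv).locallyIntegrableOn measurableSet_Ioi)
    htop hs1 hzero hmax, ?_⟩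
  have beta_form : ∀ u ∈ Ioi (0 : ℝ),
      u ^ s * (-lam * (u ^ (lam - 1) * (1 + u) ^ (-(lam + 1)))) =
        -lam * (u ^ (s + lam - 1) * (1 + u) ^ (-(s + lam + (1 - s)))) := by
    intro u hu
    rw [add_sub_assoc, Real.rpow_add hu, show s + lam + (1 - s) = lam + 1 by ring]
    ring
  have integrable_rpow_mul_deriv := IntegrableOn.congr_fun
    ((integrableOn_Ioi_rpow_mul_one_add_rpow hslam hs1').const_mul (-lam))
    (fun u hu ↦ (beta_form u hu).symm) measurableSet_Ioi
  have parts := mul_integral_rpow_sub_one_mul_eq_neg_integral_rpow_mul_deriv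
    hderiv htop hs1 hzero hmax integrable_rpow_mul_deriv
  rw [setIntegral_congr_fun measurableSet_Ioi beta_form, integral_const_mul,
    integral_Ioi_rpow_mul_one_add_rpow hslam hs1', beta,
    show s + lam + (1 - s) = lam + 1 by ring, Real.Gamma_add_one hlam] at parts
  rw [← mul_right_inj' hs0.ne', parts]
  field_simp

/-- For `s ∈ (0,1)` and `λ > 0`, the integral
`∫₀^∞ u^{s-1} (1 - (u/(1+u))^λ) du` converges and equals
`Γ(1-s) Γ(s+λ) / (s Γ(λ))`. -/
theorem integral_dagum_mellin (s lam : ℝ) (hs0 : 0 < s) (hs1 : s < 1) (hlam : 0 < lam) :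
    IntegrableOn (fun u : ℝ => u ^ (s - 1) * (1 - (u / (1 + u)) ^ lam)) (Ioi 0) ∧
    ∫ u in Ioi (0 : ℝ), u ^ (s - 1) * (1 - (u / (1 + u)) ^ lam)
      = Real.Gamma (1 - s) * Real.Gamma (s + lam) / (s * Real.Gamma lam) :=
  integral_dagum_mellin_general s lam hs0 hs1 (add_pos hs0 hlam) hlam.ne'
end
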